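/- arXiv:1605.08310 — 12 statements merged into one kernel-verified Lean document; each statement's English description precedes it below -/
import Mathlib

section
/- Duality principle: For every quasi-poset P on [n], the polynomials ehr_P and ehr^str_P satisfy ehr^str_P(X) = (-1)^{cl(P)} · ehr_P(-X), i.e. ehr^str_P equals (-1)^{cl(P)} times the composition of ehr_P with the polynomial -X. -/
open Polynomial

/-- Number of monotone maps `Fin n → Fin k` for the quasi-poset `le` (the set `L_P(k)`). -/
noncomputable def LCount {n : ℕ} (le : Fin n → Fin n → Prop) (k : ℕ) : ℕ :=
  Nat.card {f : Fin n → Fin k // ∀ i j, le i j → f i ≤ f j}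

/-- Number of strictly monotone maps `Fin n → Fin k` (the set `L^str_P(k)`). -/
noncomputable def LstrCount {n : ℕ} (le : Fin n → Fin n → Prop) (k : ℕ) : ℕ :=
  Nat.card {f : Fin n → Fin k //
    (∀ i j, le i j → f i ≤ f j) ∧ (∀ i j, le i j → f i = f j → le j i)}

/-- `cl(P)`: the number of equivalence classes of the equivalence `i ≤_P j ∧ j ≤_P i`. -/
noncomputable def clQP {n : ℕ} (le : Fin n → Fin n → Prop) : ℕ :=
  Nat.card (Quot (fun i j : Fin n => le i j ∧ le j i))

/-!
Compare the values of a map `f` at two incomparable elements `a`, `b` of a quasi-poset `P`. If `P₁`,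
`P₂`, `P₃` arise from `P` by forcing `a ≤ b`, `b ≤ a` and `a ~ b` respectively, then
`ehr P = ehr P₁ + ehr P₂ - ehr P₃` and `ehr^str P = ehr^str P₁ + ehr^str P₂ + ehr^str P₃`. Since
`cl P₁ = cl P₂ = cl P` and `cl P₃ = cl P - 1`, the substitution `X ↦ -X` with the sign `(-1)^cl`
turns the first recursion into the second. As each `Pᵢ` has strictly more related pairs than `P`,
only total quasi-posets remain. With `c` classes these have `multichoose k c` monotone and
`choose k c` strictly monotone maps into `Fin k`, which are the values of `X(X+1)⋯(X+c-1) / c!` at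
`k` and, up to the sign `(-1)^c`, at `-k`.
-/

open Function

theorem ncard_strictMono_fin (n : ℕ) (γ : Type*) [LinearOrder γ] :
    {g : Fin n → γ | StrictMono g}.ncard = (Nat.card γ).choose n := by
  let e : {g : Fin n → γ | StrictMono g} ≃ (Fin n ↪o γ) :=
    { toFun g := OrderEmbedding.ofStrictMono g.1 g.2
      invFun g := ⟨g, g.strictMono⟩
      left_inv _ := rfl
      right_inv _ := rfl }
  rw [← Nat.card_coe_set_eq, Nat.card_congr (e.trans Set.powersetCard.ofFinEmbEquiv),
    Set.powersetCard.card]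

theorem ncard_monotone_fin (n : ℕ) (γ : Type*) [LinearOrder γ] [Finite γ] :
    {g : Fin n → γ | Monotone g}.ncard = (Nat.card γ).multichoose n := by
  have := Fintype.ofFinite γ
  let toSym (g : {g : Fin n → γ | Monotone g}) : Sym γ n := ⟨(List.ofFn g.1 :), by simp⟩
  have toSym_bijective : Bijective toSym := by
    refine ⟨fun g h hgh ↦ Subtype.ext <| List.ofFn_injective ?_, ?_⟩
    · exact (Multiset.coe_eq_coe.1 <| congrArg Sym.toMultiset hgh).eq_of_sortedLE
        g.2.sortedLE_ofFn h.2.sortedLE_ofFn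
    · rintro ⟨s, rfl⟩
      obtain ⟨l, hl, rfl⟩ : ∃ l : List γ, l.SortedLE ∧ (l : Multiset γ) = s :=
        ⟨s.sort, (s.pairwise_sort _).sortedLE, s.sort_eq _⟩
      exact ⟨⟨l.get, hl⟩, Subtype.ext <| congrArg Multiset.ofList l.ofFn_get⟩
  rw [← Nat.card_coe_set_eq, Nat.card_eq_of_bijective _ toSym_bijective,
    Nat.card_eq_fintype_card, Sym.card_sym_eq_multichoose, Nat.card_eq_fintype_card]

theorem eq_of_forall_eval_natCast_eq {R : Type*} [CommRing R] [IsDomain R] [CharZero R]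
    {p q : R[X]} (h : ∀ k : ℕ, p.eval (k : R) = q.eval (k : R)) : p = q :=
  eq_of_infinite_eval_eq p q <|
    (Set.infinite_range_of_injective Nat.cast_injective).mono (Set.range_subset_iff.2 h)

theorem eval_natCast_ascPochhammer (R : Type*) [Semiring R] (n k : ℕ) :
    (ascPochhammer R n).eval (k : R) = n.factorial * k.multichoose n := by
  rw [ascPochhammer_nat_eq_natCast_ascFactorial, Nat.ascFactorial_eq_factorial_mul_choose',
    Nat.multichoose_eq, Nat.cast_mul]

theorem eval_neg_natCast_ascPochhammer (R : Type*) [Ring R] (n k : ℕ) :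
    (ascPochhammer R n).eval (-k : R) = (-1) ^ n * (n.factorial * k.choose n) := by
  rw [ascPochhammer_eval_neg_eq_descPochhammer, descPochhammer_eval_eq_descFactorial,
    Nat.descFactorial_eq_factorial_mul_choose, Nat.cast_mul]

/-- The maps `α → β` sending `r` to `≤`; for `β = Fin k` this is the paper's `L_P(k)`. -/
def monotoneMaps {α : Type*} (r : α → α → Prop) (β : Type*) [LE β] : Set (α → β) :=
  {f | ∀ i j, r i j → f i ≤ f j}

/-- The maps in `monotoneMaps r β` that identify only equivalent elements among those related by
`r`; for `β = Fin k` this is the paper's `L^str_P(k)`. -/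
def strictMonotoneMaps {α : Type*} (r : α → α → Prop) (β : Type*) [LE β] : Set (α → β) :=
  {f | (∀ i j, r i j → f i ≤ f j) ∧ ∀ i j, r i j → f i = f j → r j i}

section Total

variable {α β γ : Type*} {r : α → α → Prop} {π : α → γ}

theorem monotoneMaps_eq_image [Preorder γ] [PartialOrder β] (hπ : Surjective π)
    (hr : ∀ i j, r i j ↔ π i ≤ π j) :
    monotoneMaps r β = (· ∘ π) '' {g | Monotone g} := by
  ext f
  constructor
  · intro hf
    have f_mono (i j) (h : π i ≤ π j) : f i ≤ f j := hf i j ((hr i j).2 h)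
    have f_factors : (f ∘ surjInv hπ) ∘ π = f := funext fun i ↦
      le_antisymm (f_mono _ _ (surjInv_eq hπ _).le) (f_mono _ _ (surjInv_eq hπ _).ge)
    refine ⟨f ∘ surjInv hπ, fun x y hxy ↦ f_mono _ _ ?_, f_factors⟩
    rwa [surjInv_eq hπ, surjInv_eq hπ]
  · rintro ⟨g, hg, rfl⟩ i j hij
    exact hg ((hr i j).1 hij)

theorem strictMonotoneMaps_eq_image [PartialOrder γ] [PartialOrder β] (hπ : Surjective π)
    (hr : ∀ i j, r i j ↔ π i ≤ π j) :
    strictMonotoneMaps r β = (· ∘ π) '' {g | StrictMono g} := by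
  ext f
  constructor
  · rintro ⟨hf, hf'⟩
    obtain ⟨g, hg, rfl⟩ := (monotoneMaps_eq_image hπ hr).subset hf
    refine ⟨g, fun x y hxy ↦ (hg hxy.le).lt_of_ne fun hgxy ↦ ?_, rfl⟩
    obtain ⟨i, rfl⟩ := hπ x
    obtain ⟨j, rfl⟩ := hπ y
    exact hxy.not_ge ((hr j i).1 (hf' i j ((hr i j).2 hxy.le) hgxy))
  · rintro ⟨g, hg, rfl⟩
    refine ⟨fun i j hij ↦ hg.monotone ((hr i j).1 hij), fun i j hij hgij ↦ (hr j i).2 ?_⟩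
    exact (((hr i j).1 hij).eq_of_not_lt fun h ↦ (hg h).ne hgij).ge

theorem exists_surjective_rank [Finite α] (r : α → α → Prop) [IsPreorder α r] [Std.Total r] :
    ∃ π : α → Fin (Nat.card (Antisymmetrization α r)),
      Surjective π ∧ ∀ i j, r i j ↔ π i ≤ π j := by
  classical
  let : Preorder α := { le := r, le_refl := refl_of r, le_trans := fun _ _ _ ↦ trans_of r }
  have : Finite (Antisymmetrization α (· ≤ ·)) := Quotient.finite _
  have := Fintype.ofFinite (Antisymmetrization α (· ≤ ·))
  let rank := (Fintype.orderIsoFinOfCardEq (Antisymmetrization α (· ≤ ·))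
    Nat.card_eq_fintype_card.symm).symm
  refine ⟨fun i ↦ rank (toAntisymmetrization _ i),
    rank.surjective.comp Quotient.mk_surjective, fun i j ↦ ?_⟩
  rw [rank.le_iff_le]
  rfl

end Total

/-- The relation obtained from `r` by forcing `a` below `b`: for a preorder `r`, the least preorder
containing `r` and the pair `(a, b)`. -/
def adjoinRel {α : Type*} (r : α → α → Prop) (a b i j : α) : Prop :=
  r i j ∨ r i a ∧ r b j

/-- The relation obtained from `r` by forcing `a` and `b` to be equivalent, i.e. the contraction
of the pair `a`, `b` without changing the underlying type. -/
def identifyRel {α : Type*} (r : α → α → Prop) (a b : α) : α → α → Prop :=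
  adjoinRel (adjoinRel r a b) b a

section Relation

variable {α : Type*} {r : α → α → Prop} {a b i j : α}

theorem adjoinRel_self [Std.Refl r] : adjoinRel r a b a b := .inr ⟨refl_of r a, refl_of r b⟩

instance [IsPreorder α r] : IsPreorder α (adjoinRel r a b) where
  refl i := .inl (refl_of r i)
  trans i j k := by
    rintro (hij | ⟨hia, hbj⟩) (hjk | ⟨hja, hbk⟩)
    · exact .inl (trans_of r hij hjk)
    · exact .inr ⟨trans_of r hij hja, hbk⟩
    · exact .inr ⟨hia, trans_of r hbj hjk⟩
    · exact .inr ⟨hia, hbk⟩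

instance [IsPreorder α r] : IsPreorder α (identifyRel r a b) :=
  inferInstanceAs (IsPreorder α (adjoinRel _ b a))

theorem lt_adjoinRel [Std.Refl r] (hab : ¬ r a b) : r < adjoinRel r a b :=
  lt_of_le_not_ge (fun _ _ ↦ .inl) fun h ↦ hab (h a b adjoinRel_self)

theorem lt_identifyRel [Std.Refl r] (hab : ¬ r a b) : r < identifyRel r a b :=
  (lt_adjoinRel hab).trans_le fun _ _ ↦ .inl

theorem identifyRel_iff [IsPreorder α r] :
    identifyRel r a b i j ↔ r i j ∨ r i a ∧ r b j ∨ r i b ∧ r a j := by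
  have r_trans {x y z} : r x y → r y z → r x z := trans_of r
  have r_refl := refl_of r
  simp only [identifyRel, adjoinRel]
  grind

theorem antisymmRel_adjoinRel [IsTrans α r] (hba : ¬ r b a) :
    AntisymmRel (adjoinRel r a b) = AntisymmRel r := by
  have r_trans {x y z} : r x y → r y z → r x z := trans_of r
  ext i j
  simp only [AntisymmRel, adjoinRel]
  grind

theorem antisymmRel_identifyRel_iff [IsPreorder α r] (hab : ¬ r a b) (hba : ¬ r b a) :
    AntisymmRel (identifyRel r a b) i j ↔ AntisymmRel r i j ∨
      AntisymmRel r i a ∧ AntisymmRel r j b ∨ AntisymmRel r i b ∧ AntisymmRel r j a := by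
  have r_trans {x y z} : r x y → r y z → r x z := trans_of r
  simp only [AntisymmRel, identifyRel_iff]
  grind

theorem natCard_antisymmetrization_adjoinRel [IsPreorder α r] (hba : ¬ r b a) :
    Nat.card (Antisymmetrization α (adjoinRel r a b)) = Nat.card (Antisymmetrization α r) :=
  Nat.card_congr <| Quotient.congr (.refl α) fun i j ↦ by
    simp [← antisymmRel_adjoinRel hba]

theorem natCard_antisymmetrization_identifyRel [Finite α] [IsPreorder α r]
    (hab : ¬ r a b) (hba : ¬ r b a) :
    Nat.card (Antisymmetrization α (identifyRel r a b)) + 1 =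
      Nat.card (Antisymmetrization α r) := by
  have : Finite (Antisymmetrization α r) := Quotient.finite _
  let bClass := toAntisymmetrization r b
  let proj : Antisymmetrization α r → Antisymmetrization α (identifyRel r a b) :=
    Quotient.map id fun i j h ↦ (antisymmRel_identifyRel_iff hab hba).2 (.inl h)
  have proj_injOn : Set.InjOn proj {bClass}ᶜ := by
    rintro ⟨i⟩ hi ⟨j⟩ hj hij
    have hi : ¬ AntisymmRel r i b := fun h ↦ hi (Quotient.sound h)
    have hj : ¬ AntisymmRel r j b := fun h ↦ hj (Quotient.sound h)
    have := (antisymmRel_identifyRel_iff hab hba).1 (Quotient.exact hij)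
    exact Quotient.sound (by tauto)
  have proj_image_eq : proj '' {bClass}ᶜ = Set.univ := by
    refine Set.eq_univ_of_forall ?_
    rintro ⟨i⟩
    by_cases hi : AntisymmRel r i b
    · refine ⟨toAntisymmetrization r a, fun h ↦ hab (Quotient.exact h).1, Quotient.sound ?_⟩
      exact (antisymmRel_identifyRel_iff hab hba).2 (.inr (.inl ⟨.rfl, hi⟩))
    · exact ⟨toAntisymmetrization r i, fun h ↦ hi (Quotient.exact h), rfl⟩
  rw [← Set.ncard_univ, ← proj_image_eq, proj_injOn.ncard_image, ← Set.ncard_singleton bClass,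
    add_comm, Set.ncard_add_ncard_compl]

end Relation

section Recurrence

variable {α β : Type*} {r : α → α → Prop} {a b : α}

theorem monotoneMaps_adjoinRel [Std.Refl r] [Preorder β] :
    monotoneMaps (adjoinRel r a b) β = monotoneMaps r β ∩ {f | f a ≤ f b} := by
  ext f
  constructor
  · exact fun hf ↦ ⟨fun i j hij ↦ hf i j (.inl hij), hf a b adjoinRel_self⟩
  · rintro ⟨hf, hfab⟩ i j (hij | ⟨hia, hbj⟩)
    · exact hf i j hij
    · exact (hf i a hia).trans (hfab.trans (hf b j hbj))

theorem monotoneMaps_identifyRel [IsPreorder α r] [PartialOrder β] :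
    monotoneMaps (identifyRel r a b) β = monotoneMaps r β ∩ {f | f a = f b} := by
  rw [identifyRel, monotoneMaps_adjoinRel, monotoneMaps_adjoinRel, Set.inter_assoc]
  simp only [le_antisymm_iff, Set.ofPred_and]

theorem strictMonotoneMaps_subset {s : α → α → Prop} [LE β] (hrs : r ≤ s)
    (hsr : ∀ i j, r i j → s j i → r j i) : strictMonotoneMaps s β ⊆ strictMonotoneMaps r β :=
  fun _ hf ↦ ⟨fun i j hij ↦ hf.1 i j (hrs i j hij),
    fun i j hij hfij ↦ hsr i j hij (hf.2 i j (hrs i j hij) hfij)⟩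

theorem strictMonotoneMaps_adjoinRel [IsPreorder α r] [PartialOrder β] (hba : ¬ r b a) :
    strictMonotoneMaps (adjoinRel r a b) β = strictMonotoneMaps r β ∩ {f | f a < f b} := by
  have no_new_equiv {i j} (hij : adjoinRel r a b i j) (hji : adjoinRel r a b j i) : r j i :=
    ((antisymmRel_adjoinRel hba).le i j ⟨hij, hji⟩).2
  ext f
  constructor
  · refine fun hf ↦ ⟨strictMonotoneMaps_subset (fun _ _ ↦ .inl)
      (fun i j hij ↦ no_new_equiv (.inl hij)) hf, ?_⟩
    exact (hf.1 a b adjoinRel_self).lt_of_ne fun hfab ↦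
      hba (no_new_equiv adjoinRel_self (hf.2 a b adjoinRel_self hfab))
  · rintro ⟨⟨hf, hf'⟩, hfab⟩
    refine ⟨monotoneMaps_adjoinRel.superset ⟨hf, hfab.le⟩, ?_⟩
    rintro i j (hij | ⟨hia, hbj⟩) hfij
    · exact .inl (hf' i j hij hfij)
    · exact absurd hfij ((hf i a hia).trans_lt (hfab.trans_le (hf b j hbj))).ne

theorem strictMonotoneMaps_identifyRel [IsPreorder α r] [PartialOrder β]
    (hab : ¬ r a b) (hba : ¬ r b a) :
    strictMonotoneMaps (identifyRel r a b) β = strictMonotoneMaps r β ∩ {f | f a = f b} := by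
  have no_new_symm (i j) (hij : r i j) (hji : identifyRel r a b j i) : r j i := by
    have hij' : identifyRel r a b i j := identifyRel_iff.2 (.inl hij)
    obtain h | ⟨hia, hjb⟩ | ⟨hib, hja⟩ := (antisymmRel_identifyRel_iff hab hba).1 ⟨hij', hji⟩
    · exact h.2
    · exact absurd (trans_of r hia.2 (trans_of r hij hjb.1)) hab
    · exact absurd (trans_of r hib.2 (trans_of r hij hja.1)) hba
  ext f
  constructor
  · exact fun hf ↦ ⟨strictMonotoneMaps_subset (fun _ _ hij ↦ identifyRel_iff.2 (.inl hij))
      no_new_symm hf, (monotoneMaps_identifyRel.subset hf.1).2⟩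
  · rintro ⟨⟨hf, hf'⟩, hfab⟩
    refine ⟨monotoneMaps_identifyRel.superset ⟨hf, hfab⟩, fun i j hij hfij ↦ ?_⟩
    have squeeze {x y} (hix : r i x) (hfxy : f x = f y) (hyj : r y j) : r j y ∧ r x i := by
      have hfix : f i = f x := (hf i x hix).antisymm (hfxy ▸ hfij ▸ hf y j hyj)
      exact ⟨hf' y j hyj (hfxy.symm.trans (hfix.symm.trans hfij)), hf' i x hix hfix⟩
    rw [identifyRel_iff] at hij ⊢
    obtain hij | ⟨hia, hbj⟩ | ⟨hib, haj⟩ := hij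
    · exact .inl (hf' i j hij hfij)
    · exact .inr (.inr (squeeze hia hfab hbj))
    · exact .inr (.inl (squeeze hib hfab.symm haj))

theorem ncard_monotoneMaps_recurrence [Finite α] [IsPreorder α r] [LinearOrder β] [Finite β] :
    (monotoneMaps (adjoinRel r a b) β).ncard + (monotoneMaps (adjoinRel r b a) β).ncard =
      (monotoneMaps r β).ncard + (monotoneMaps (identifyRel r a b) β).ncard := by
  have union_eq : {f : α → β | f a ≤ f b} ∪ {f | f b ≤ f a} = Set.univ :=
    Set.eq_univ_of_forall fun f ↦ le_total (f a) (f b)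
  have inter_eq : {f : α → β | f a ≤ f b} ∩ {f | f b ≤ f a} = {f | f a = f b} :=
    Set.ext fun f ↦ le_antisymm_iff.symm
  rw [← Set.ncard_union_add_ncard_inter, monotoneMaps_adjoinRel, monotoneMaps_adjoinRel,
    monotoneMaps_identifyRel, ← Set.inter_union_distrib_left, ← Set.inter_inter_distrib_left,
    union_eq, inter_eq, Set.inter_univ]

theorem ncard_strictMonotoneMaps_recurrence [Finite α] [IsPreorder α r] [LinearOrder β] [Finite β]
    (hab : ¬ r a b) (hba : ¬ r b a) :
    (strictMonotoneMaps r β).ncard =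
      (strictMonotoneMaps (adjoinRel r a b) β).ncard +
        (strictMonotoneMaps (adjoinRel r b a) β).ncard +
        (strictMonotoneMaps (identifyRel r a b) β).ncard := by
  have union_eq : {f : α → β | f a < f b} ∪ {f | f b < f a} ∪ {f | f a = f b} = Set.univ :=
    Set.eq_univ_of_forall fun f ↦ by
      obtain h | h | h := lt_trichotomy (f a) (f b) <;> simp [h]
  have disjoint_lt_gt : Disjoint {f : α → β | f a < f b} {f | f b < f a} :=
    Set.disjoint_left.2 fun _ ↦ lt_asymm
  have disjoint_ne_eq : Disjoint ({f : α → β | f a < f b} ∪ {f | f b < f a}) {f | f a = f b} :=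
    Set.disjoint_left.2 fun _ h ↦ h.elim ne_of_lt ne_of_gt
  rw [strictMonotoneMaps_adjoinRel hba, strictMonotoneMaps_adjoinRel hab,
    strictMonotoneMaps_identifyRel hab hba,
    ← Set.ncard_union_eq (disjoint_lt_gt.mono Set.inter_subset_right Set.inter_subset_right),
    ← Set.inter_union_distrib_left,
    ← Set.ncard_union_eq (disjoint_ne_eq.mono Set.inter_subset_right Set.inter_subset_right),
    ← Set.inter_union_distrib_left, union_eq, Set.inter_univ]

end Recurrence

/-- The reciprocity property of a preorder `r`, over a coefficient field `K`: some polynomial takes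
the values `L_P(k)` at `k` and `(-1)^{cl(P)} L^str_P(k)` at `-k` for every natural number `k`. -/
def SatisfiesReciprocity (K : Type*) [Field K] {α : Type*} (r : α → α → Prop) [IsPreorder α r] :
    Prop :=
  ∃ p : K[X], (∀ k : ℕ, p.eval (k : K) = (monotoneMaps r (Fin k)).ncard) ∧
    ∀ k : ℕ, p.eval (-k : K) =
      (-1) ^ Nat.card (Antisymmetrization α r) * (strictMonotoneMaps r (Fin k)).ncard

section Reciprocity

variable {K α : Type*} [Field K] {r : α → α → Prop} [IsPreorder α r]

theorem SatisfiesReciprocity.of_total [CharZero K] [Finite α] [Std.Total r] :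
    SatisfiesReciprocity K r := by
  obtain ⟨π, hπ, hr⟩ := exists_surjective_rank r
  set c := Nat.card (Antisymmetrization α r)
  have c_factorial_ne_zero : (c.factorial : K) ≠ 0 := Nat.cast_ne_zero.2 c.factorial_ne_zero
  refine ⟨C (c.factorial : K)⁻¹ * ascPochhammer K c, fun k ↦ ?_, fun k ↦ ?_⟩
  · rw [monotoneMaps_eq_image hπ hr, Set.ncard_image_of_injective _ hπ.injective_comp_right,
      ncard_monotone_fin, Nat.card_fin, eval_mul, eval_C, eval_natCast_ascPochhammer,
      inv_mul_cancel_left₀ c_factorial_ne_zero]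
  · rw [strictMonotoneMaps_eq_image hπ hr, Set.ncard_image_of_injective _ hπ.injective_comp_right,
      ncard_strictMono_fin, Nat.card_fin, eval_mul, eval_C, eval_neg_natCast_ascPochhammer,
      mul_left_comm, inv_mul_cancel_left₀ c_factorial_ne_zero]

theorem SatisfiesReciprocity.of_adjoinRel_of_identifyRel [Finite α] {a b : α}
    (hab : ¬ r a b) (hba : ¬ r b a) (h₁ : SatisfiesReciprocity K (adjoinRel r a b))
    (h₂ : SatisfiesReciprocity K (adjoinRel r b a))
    (h₃ : SatisfiesReciprocity K (identifyRel r a b)) : SatisfiesReciprocity K r := by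
  obtain ⟨p₁, hp₁, hp₁'⟩ := h₁
  obtain ⟨p₂, hp₂, hp₂'⟩ := h₂
  obtain ⟨p₃, hp₃, hp₃'⟩ := h₃
  refine ⟨p₁ + p₂ - p₃, fun k ↦ ?_, fun k ↦ ?_⟩
  · rw [eval_sub, eval_add, hp₁, hp₂, hp₃, sub_eq_iff_eq_add]
    exact_mod_cast congrArg (Nat.cast (R := K)) ncard_monotoneMaps_recurrence
  · rw [eval_sub, eval_add, hp₁', hp₂', hp₃', natCard_antisymmetrization_adjoinRel hba,
      natCard_antisymmetrization_adjoinRel hab, ncard_strictMonotoneMaps_recurrence hab hba,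
      ← natCard_antisymmetrization_identifyRel hab hba]
    push_cast
    ring

end Reciprocity

theorem satisfiesReciprocity (K : Type*) {α : Type*} [Field K] [CharZero K] [Finite α]
    (r : α → α → Prop) [hr : IsPreorder α r] : SatisfiesReciprocity K r := by
  induction r using WellFoundedGT.induction generalizing hr with | _ r ih
  by_cases htotal : ∀ a b, r a b ∨ r b a
  · have : Std.Total r := ⟨htotal⟩
    exact .of_total
  · push Not at htotal
    obtain ⟨a, b, hab, hba⟩ := htotal
    exact .of_adjoinRel_of_identifyRel hab hba (ih _ (lt_adjoinRel hab))
      (ih _ (lt_adjoinRel hba)) (ih _ (lt_identifyRel hab))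

theorem duality_principle_general {K α : Type*} [Field K] [CharZero K] [Finite α]
    (r : α → α → Prop) [IsPreorder α r] (p q : K[X])
    (hp : ∀ k : ℕ, p.eval (k : K) = (monotoneMaps r (Fin k)).ncard)
    (hq : ∀ k : ℕ, q.eval (k : K) = (strictMonotoneMaps r (Fin k)).ncard) :
    q = C ((-1) ^ Nat.card (Antisymmetrization α r)) * p.comp (-X) := by
  obtain ⟨p', hp', hp'_neg⟩ := satisfiesReciprocity K r
  obtain rfl : p = p' := eq_of_forall_eval_natCast_eq fun k ↦ (hp k).trans (hp' k).symm
  refine eq_of_forall_eval_natCast_eq fun k ↦ ?_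
  rw [hq, eval_mul, eval_C, eval_comp, eval_neg, eval_X, hp'_neg, ← mul_assoc, ← mul_pow,
    neg_one_mul, neg_neg, one_pow, one_mul]

/-- Duality principle: `ehr^str_P(X) = (-1)^{cl(P)} · ehr_P(-X)`. -/
theorem duality_principle {n : ℕ} (le : Fin n → Fin n → Prop)
    (hrefl : ∀ i, le i i)
    (htrans : ∀ i j k, le i j → le j k → le i k)
    (p q : ℚ[X])
    (hp : ∀ k : ℕ, p.eval (k : ℚ) = LCount le k)
    (hq : ∀ k : ℕ, q.eval (k : ℚ) = LstrCount le k) :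
    q = Polynomial.C ((-1 : ℚ) ^ clQP le) * p.comp (-Polynomial.X) := by
  have : IsPreorder (Fin n) le := { refl := hrefl, trans := htrans }
  exact duality_principle_general le p q hp hq
end

section
/- Let ≤_P be a partial order on Fin n. Then μ_P · P! ≥ n!, where μ_P is the number of bijections f : Fin n → Fin n such that i ≤_P j implies f(i) ≤ f(j), and P! = Π_{i ∈ Fin n} #{j ∈ Fin n : i ≤_P j}. Moreover equality holds if and only if P is a rooted forest, i.e. for all a, b, c ∈ Fin n, a ≤_P c and b ≤_P c imply (a ≤_P b or b ≤_P a). -/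
/-- `μ_P`: the number of heap-orderings of the poset `le`, i.e. bijections
`f : Fin n → Fin n` such that `i ≤_P j` implies `f i ≤ f j`. -/
noncomputable def heapOrderings {n : ℕ} (le : Fin n → Fin n → Prop) : ℕ :=
  Nat.card {f : Fin n → Fin n //
    Function.Bijective f ∧ ∀ i j, le i j → f i ≤ f j}

/-- `P!`: the factorial of the poset `le`. -/
noncomputable def posetFactorial {n : ℕ} (le : Fin n → Fin n → Prop) : ℕ :=
  ∏ i : Fin n, Nat.card {j : Fin n // le i j}

/-! Deleting a minimal element `m` divides the factorial by `#(Set.Ici m)`, and a heap-ordering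
amounts to a minimal element `m`, which comes first, and a heap-ordering of `P \ m`. Hence
`μ(P) * P! = ∑ m, #(Set.Ici m) * (μ(P \ m) * (P \ m)!)`, summed over the minimal `m`. By induction
each bracket is at least `(n - 1)!`, and `∑ m, #(Set.Ici m) ≥ n` as the sets `Set.Ici m` cover `P`.
Equality holds iff the cover is disjoint and every `P \ m` is a rooted forest, which together say
that `P` is a rooted forest. -/

/-- A heap-ordering of `α` by `Fin k`: a monotone bijection `α → Fin k`. There is one only if
`α` has `k` elements; keeping `k` a free parameter spares casts between `Fin` types. -/
abbrev HeapOrdering (α : Type*) [Preorder α] (k : ℕ) : Type _ :=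
  {f : α → Fin k // Function.Bijective f ∧ Monotone f}

/-- The factorial `P!` of a finite poset: the product of the sizes of its principal upper sets. -/
noncomputable def orderFactorial (α : Type*) [Preorder α] [Fintype α] : ℕ :=
  ∏ i : α, (Set.Ici i).ncard

/-- A rooted forest, with the roots at the bottom: any two elements with a common upper bound are
comparable. -/
def IsRootedForest (α : Type*) [LE α] : Prop :=
  ∀ a b c : α, a ≤ c → b ≤ c → a ≤ b ∨ b ≤ a

namespace HeapOrdering

variable {α : Type*} {k : ℕ} {m : α}

section Preorder

variable [Preorder α]

/-- The element which a heap-ordering places first. -/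
noncomputable def root (f : HeapOrdering α (k + 1)) : α :=
  (Equiv.ofBijective f.1 f.2.1).symm 0

theorem root_eq_iff {f : HeapOrdering α (k + 1)} : f.root = m ↔ f.1 m = 0 := by
  rw [root, Equiv.symm_apply_eq, Equiv.ofBijective_apply, eq_comm]

theorem isMin_root (f : HeapOrdering α (k + 1)) : IsMin f.root := by
  intro x hx
  have hfx : f.1 x = 0 := by simpa only [root_eq_iff.1 rfl, Fin.le_zero_iff] using f.2.2 hx
  exact (root_eq_iff.2 hfx).le

/-- The heap-ordering of the elements other than the root `m`, with all positions lowered by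
one. -/
def eraseRoot (f : HeapOrdering α (k + 1)) (hm : f.1 m = 0) : HeapOrdering {x // x ≠ m} k :=
  have hne (x : {x // x ≠ m}) : f.1 x ≠ 0 := fun h => x.2 (f.2.1.injective (h.trans hm.symm))
  ⟨fun x => (f.1 x).pred (hne x), by
    refine ⟨⟨fun x y hxy => ?_, fun i => ?_⟩, fun x y hxy => ?_⟩
    · exact Subtype.ext (f.2.1.injective (Fin.pred_inj.1 hxy))
    · obtain ⟨x, hx⟩ := f.2.1.surjective i.succ
      have hxm : x ≠ m := by
        rintro rfl
        exact Fin.succ_ne_zero i (hx.symm.trans hm)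
      exact ⟨⟨x, hxm⟩, by simp only [hx, Fin.pred_succ]⟩
    · exact Fin.pred_le_pred_iff.2 (f.2.2 hxy)⟩

end Preorder

section PartialOrder

variable [PartialOrder α] [DecidableEq α]

/-- The heap-ordering that places the minimal element `m` before all others, which keep their
order. -/
def addRoot (hm : IsMin m) (g : HeapOrdering {x // x ≠ m} k) : HeapOrdering α (k + 1) :=
  ⟨fun x => if hx : x = m then 0 else (g.1 ⟨x, hx⟩).succ, by
    refine ⟨⟨fun x y hxy => ?_, fun i => ?_⟩, fun x y hxy => ?_⟩
    · by_cases hx : x = m <;> by_cases hy : y = m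
      · exact hx.trans hy.symm
      · simp [hx, hy, (Fin.succ_ne_zero _).symm] at hxy
      · simp [hx, hy] at hxy
      · simpa [hx, hy, g.2.1.injective.eq_iff] using hxy
    · cases i using Fin.cases with
      | zero => exact ⟨m, by simp⟩
      | succ i =>
        obtain ⟨x, hx⟩ := g.2.1.surjective i
        exact ⟨x, by simp [x.2, hx]⟩
    · by_cases hx : x = m
      · simp [hx]
      · have hy : y ≠ m := by
          rintro rfl
          exact hx (hm.eq_of_le hxy)
        have hle : g.1 ⟨x, hx⟩ ≤ g.1 ⟨y, hy⟩ := g.2.2 hxy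
        simpa [hx, hy] using hle⟩

/-- Heap-orderings with a prescribed root correspond to heap-orderings of the other elements. -/
def eraseRootEquiv (hm : IsMin m) :
    {f : HeapOrdering α (k + 1) // f.1 m = 0} ≃ HeapOrdering {x // x ≠ m} k where
  toFun f := f.1.eraseRoot f.2
  invFun g := ⟨addRoot hm g, by simp [addRoot]⟩
  left_inv := by
    rintro ⟨f, hf⟩
    ext x
    by_cases hx : x = m <;> simp [addRoot, eraseRoot, hx, hf]
  right_inv g := by
    ext x
    simp [addRoot, eraseRoot, x.2]

end PartialOrder

theorem card_zero [Preorder α] [IsEmpty α] : Nat.card (HeapOrdering α 0) = 1 :=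
  Nat.card_eq_one_iff_unique.2
    ⟨inferInstance, isEmptyElim, ⟨isEmptyElim, fun i => i.elim0⟩, isEmptyElim⟩

theorem card_succ [PartialOrder α] [Finite α] [Fintype {m : α // IsMin m}] :
    Nat.card (HeapOrdering α (k + 1)) =
      ∑ m : {m : α // IsMin m}, Nat.card (HeapOrdering {x // x ≠ m.1} k) := by
  classical
  let minRoot (f : HeapOrdering α (k + 1)) : {m : α // IsMin m} := ⟨f.root, f.isMin_root⟩
  have fiberEquiv (m : {m : α // IsMin m}) :
      {f : HeapOrdering α (k + 1) // minRoot f = m} ≃ HeapOrdering {x // x ≠ m.1} k :=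
    have hfiber (f : HeapOrdering α (k + 1)) : minRoot f = m ↔ f.1 m = 0 :=
      Subtype.ext_iff.trans root_eq_iff
    (Equiv.subtypeEquivRight hfiber).trans (eraseRootEquiv m.2)
  rw [Nat.card_congr (Equiv.sigmaFiberEquiv minRoot).symm, Nat.card_sigma]
  exact Finset.sum_congr rfl fun m _ => Nat.card_congr (fiberEquiv m)

end HeapOrdering

section Minimal

variable {α : Type*}

theorem exists_isMin_le [Preorder α] [WellFoundedLT α] (x : α) : ∃ m, IsMin m ∧ m ≤ x := by
  obtain ⟨m, hmx, hm⟩ := exists_minimal_le_of_wellFoundedLT (fun _ => True) x trivial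
  exact ⟨m, minimal_true.1 hm, hmx⟩

theorem sum_ncard_Ici [Preorder α] [Fintype α] {ι : Type*} [Fintype ι] (f : ι → α) :
    ∑ i, (Set.Ici (f i)).ncard = ∑ x, Nat.card {i // f i ≤ x} := by
  classical
  simpa only [Finset.bipartiteAbove, Finset.bipartiteBelow, ← Fintype.card_subtype,
    ← Nat.card_eq_fintype_card] using!
    Finset.sum_card_bipartiteAbove_eq_sum_card_bipartiteBelow
      (s := Finset.univ) (t := Finset.univ) (fun i x => f i ≤ x)

theorem one_le_card_isMin_le [Preorder α] [Finite α] (x : α) :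
    1 ≤ Nat.card {m : {m : α // IsMin m} // m.1 ≤ x} := by
  obtain ⟨m, hm, hmx⟩ := exists_isMin_le x
  exact Nat.card_pos_iff.2 ⟨⟨⟨m, hm⟩, hmx⟩, inferInstance⟩

section Cover

variable [Preorder α] [Fintype α] [Fintype {m : α // IsMin m}]

theorem card_le_sum_ncard_Ici_isMin :
    Fintype.card α ≤ ∑ m : {m : α // IsMin m}, (Set.Ici m.1).ncard := by
  rw [sum_ncard_Ici, Fintype.card_eq_sum_ones]
  exact Finset.sum_le_sum fun x _ => one_le_card_isMin_le x

theorem card_eq_sum_ncard_Ici_isMin_iff_pairwiseDisjoint :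
    Fintype.card α = ∑ m : {m : α // IsMin m}, (Set.Ici m.1).ncard ↔
      {m : α | IsMin m}.PairwiseDisjoint Set.Ici := by
  have hunique (x : α) : 1 = Nat.card {m : {m : α // IsMin m} // m.1 ≤ x} ↔
      ∀ m m' : α, IsMin m → IsMin m' → m ≤ x → m' ≤ x → m = m' := by
    rw [← (one_le_card_isMin_le x).ge_iff_eq, Finite.card_le_one_iff_subsingleton,
      subsingleton_iff]
    simp only [Subtype.forall, Subtype.mk.injEq]
    grind
  have hdisjoint : {m : α | IsMin m}.PairwiseDisjoint Set.Ici ↔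
      ∀ x m m' : α, IsMin m → IsMin m' → m ≤ x → m' ≤ x → m = m' := by
    simp only [Set.PairwiseDisjoint, Set.Pairwise, Function.onFun, Set.disjoint_left, Set.mem_Ici,
      Set.mem_ofPred_eq]
    grind
  rw [sum_ncard_Ici, Fintype.card_eq_sum_ones,
    Finset.sum_eq_sum_iff_of_le fun x _ => one_le_card_isMin_le x, hdisjoint]
  simp only [Finset.mem_univ, forall_const, hunique]

end Cover

theorem isRootedForest_iff_pairwiseDisjoint [PartialOrder α] [WellFoundedLT α] :
    IsRootedForest α ↔ {m : α | IsMin m}.PairwiseDisjoint Set.Ici ∧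
      ∀ m : α, IsMin m → IsRootedForest {x // x ≠ m} := by
  constructor
  · refine fun h => ⟨fun m hm m' hm' hne => ?_, fun m _ a b c => h a b c⟩
    refine Set.disjoint_left.2 fun x hmx hmx' => hne ?_
    rcases h m m' x hmx hmx' with hle | hle
    exacts [hm'.eq_of_le hle, (hm.eq_of_le hle).symm]
  · rintro ⟨hdisjoint, herase⟩ a b c hac hbc
    obtain ⟨m, hm, hma⟩ := exists_isMin_le a
    obtain ⟨m', hm', hmb⟩ := exists_isMin_le b
    obtain rfl : m = m' := hdisjoint.elim_set hm hm' c (hma.trans hac) (hmb.trans hbc)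
    rcases eq_or_ne a m with rfl | ham
    · exact .inl hmb
    rcases eq_or_ne b m with rfl | hbm
    · exact .inr hma
    have hcm : c ≠ m := by
      rintro rfl
      exact ham (hm.eq_of_le hac)
    exact herase m hm ⟨a, ham⟩ ⟨b, hbm⟩ ⟨c, hcm⟩ hac hbc

end Minimal

section WeightedSum

variable {ι R : Type*} [Semiring R] {s : Finset ι} {u v : ι → R} {N c : R}

theorem mul_le_sum_mul_of_le [PartialOrder R] [IsOrderedRing R] (hc : 0 ≤ c)
    (hu : ∀ i ∈ s, 0 ≤ u i) (hN : N ≤ ∑ i ∈ s, u i) (hv : ∀ i ∈ s, c ≤ v i) :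
    N * c ≤ ∑ i ∈ s, u i * v i :=
  calc
    N * c ≤ (∑ i ∈ s, u i) * c := mul_le_mul_of_nonneg_right hN hc
    _ = ∑ i ∈ s, u i * c := Finset.sum_mul ..
    _ ≤ ∑ i ∈ s, u i * v i :=
      Finset.sum_le_sum fun i hi => mul_le_mul_of_nonneg_left (hv i hi) (hu i hi)

theorem sum_mul_eq_mul_iff_of_le [LinearOrder R] [IsStrictOrderedRing R] (hc : 0 < c)
    (hu : ∀ i ∈ s, 0 < u i) (hN : N ≤ ∑ i ∈ s, u i) (hv : ∀ i ∈ s, c ≤ v i) :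
    ∑ i ∈ s, u i * v i = N * c ↔ N = ∑ i ∈ s, u i ∧ ∀ i ∈ s, v i = c := by
  have hterm (i) (hi : i ∈ s) : u i * c ≤ u i * v i :=
    mul_le_mul_of_nonneg_left (hv i hi) (hu i hi).le
  have hterm_eq : ∑ i ∈ s, u i * c = ∑ i ∈ s, u i * v i ↔ ∀ i ∈ s, v i = c := by
    rw [Finset.sum_eq_sum_iff_of_le hterm]
    exact forall₂_congr fun i hi =>
      (strictMono_mul_left_of_pos (hu i hi)).injective.eq_iff.trans eq_comm
  constructor
  · intro h
    have hle : (∑ i ∈ s, u i) * c ≤ N * c :=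
      h ▸ mul_le_sum_mul_of_le hc.le (fun i hi => (hu i hi).le) le_rfl hv
    have hN_eq : N = ∑ i ∈ s, u i := hN.antisymm (le_of_mul_le_mul_right hle hc)
    exact ⟨hN_eq, hterm_eq.1 (by rw [h, hN_eq, Finset.sum_mul])⟩
  · rintro ⟨rfl, hv_eq⟩
    rw [← hterm_eq.2 hv_eq, Finset.sum_mul]

end WeightedSum

theorem orderFactorial_eq_mul_of_isMin {α : Type*} [PartialOrder α] [Fintype α]
    [DecidableEq α] {m : α} (hm : IsMin m) :
    orderFactorial α = (Set.Ici m).ncard * orderFactorial {x // x ≠ m} := by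
  rw [orderFactorial, Fintype.prod_eq_mul_prod_subtype_ne (fun i : α => (Set.Ici i).ncard) m,
    orderFactorial]
  congr 1
  refine Finset.prod_congr rfl fun i _ => ?_
  have hIci : Subtype.val '' Set.Ici i = Set.Ici i.1 := by
    ext x
    refine ⟨?_, fun hix => ⟨⟨x, ?_⟩, hix, rfl⟩⟩
    · rintro ⟨y, hiy, rfl⟩
      exact hiy
    · rintro rfl
      exact i.2 (hm.eq_of_le hix)
  rw [← hIci, Set.ncard_image_of_injective _ Subtype.val_injective]

theorem card_heapOrdering_succ_mul_orderFactorial {α : Type*} [PartialOrder α] [Fintype α]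
    [DecidableEq α] [Fintype {m : α // IsMin m}] (k : ℕ) :
    Nat.card (HeapOrdering α (k + 1)) * orderFactorial α =
      ∑ m : {m : α // IsMin m}, (Set.Ici m.1).ncard *
        (Nat.card (HeapOrdering {x // x ≠ m.1} k) * orderFactorial {x // x ≠ m.1}) := by
  rw [HeapOrdering.card_succ, Finset.sum_mul]
  refine Finset.sum_congr rfl fun m _ => ?_
  rw [orderFactorial_eq_mul_of_isMin m.2, mul_left_comm]

theorem mu_mul_factorial_ge_general {α : Type*} [PartialOrder α] [Fintype α] {n : ℕ}
    (hn : Fintype.card α = n) :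
    n.factorial ≤ Nat.card (HeapOrdering α n) * orderFactorial α ∧
      (Nat.card (HeapOrdering α n) * orderFactorial α = n.factorial ↔ IsRootedForest α) := by
  classical
  induction n generalizing α with
  | zero =>
    have : IsEmpty α := Fintype.card_eq_zero_iff.1 hn
    rw [HeapOrdering.card_zero]
    simp [orderFactorial, IsRootedForest]
  | succ k ih =>
    have hcard (m : α) : Fintype.card {x // x ≠ m} = k := by simp [hn]
    have hcover : k + 1 ≤ ∑ m : {m : α // IsMin m}, (Set.Ici m.1).ncard :=
      hn ▸ card_le_sum_ncard_Ici_isMin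
    have hIci (m : {m : α // IsMin m}) (_ : m ∈ Finset.univ) : 0 < (Set.Ici m.1).ncard :=
      (Set.ncard_pos).2 Set.nonempty_Ici
    have herase (m : {m : α // IsMin m}) (_ : m ∈ Finset.univ) : k.factorial ≤
        Nat.card (HeapOrdering {x // x ≠ m.1} k) * orderFactorial {x // x ≠ m.1} :=
      (ih (hcard m)).1
    rw [card_heapOrdering_succ_mul_orderFactorial, Nat.factorial_succ]
    refine ⟨mul_le_sum_mul_of_le (Nat.zero_le _) (fun _ _ => Nat.zero_le _) hcover herase, ?_⟩
    rw [sum_mul_eq_mul_iff_of_le k.factorial_pos hIci hcover herase, ← hn,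
      card_eq_sum_ncard_Ici_isMin_iff_pairwiseDisjoint, isRootedForest_iff_pairwiseDisjoint]
    simp only [Finset.mem_univ, forall_const, Subtype.forall, ih (hcard _)]

/-- `μ_P · P! ≥ n!`, with equality if and only if `P` is a rooted forest. -/
theorem mu_mul_factorial_ge {n : ℕ} (le : Fin n → Fin n → Prop)
    (hrefl : ∀ i, le i i)
    (htrans : ∀ i j k, le i j → le j k → le i k)
    (hantisymm : ∀ i j, le i j → le j i → i = j) :
    n.factorial ≤ heapOrderings le * posetFactorial le ∧
    (heapOrderings le * posetFactorial le = n.factorial ↔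
      ∀ a b c, le a c → le b c → (le a b ∨ le b a)) :=
  @mu_mul_factorial_ge_general (Fin n)
    { le, lt a b := le a b ∧ ¬le b a, le_refl := hrefl, le_trans := htrans,
      le_antisymm := hantisymm }
    _ n (Fintype.card_fin n)
end

section
/- Non-commutative duality principle (combinatorial form): Let P be a quasi-poset on [n] and let u : Fin n → Fin m be any surjection (a packed word of length n). Then, as an identity of integers, (1 if u ∈ W_P, else 0) = (-1)^{cl(P)} · Σ_{w ∈ W^str_P, w admitting a non-decreasing surjection σ : Fin(max(w)) → Fin m with u = σ ∘ w} (-1)^{max(w)}. -/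
/-!
If `u` is monotone, the strict packed words `w` of `P` through which `u` factors monotonically are
exactly the strict packed words of the preorder "compare by `u`, then by `P`", which has the same
equivalence classes as `P`. So it suffices to show that the strict packed words of any finite
preorder have signed count `(-1) ^ cl`, and one may pass to the quotient partial order.
There the last letter of a word occupies a nonempty set `A` of maximal elements, and deleting `A`
leaves an arbitrary shorter strict packed word on the complement. By induction the signed count is
`-∑_A (-1) ^ (|α| - |A|)`, and the alternating sum over all subsets `A` of the maximal elements
vanishes.
-/

variable {α β : Type*}

/-- The words in `W^str_P(k)`, for `P` the relation `r`: strict packed words with letters in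
`Fin k`. -/
structure IsStrictPackedWord (r : α → α → Prop) {k : ℕ} (w : α → Fin k) : Prop where
  surjective : Function.Surjective w
  monotone : ∀ i j, r i j → w i ≤ w j
  symm_of_eq : ∀ i j, r i j → w i = w j → r j i

namespace IsStrictPackedWord

variable {k : ℕ}

theorem iff_strictMono [PartialOrder α] {w : α → Fin k} :
    IsStrictPackedWord (· ≤ ·) w ↔ Function.Surjective w ∧ StrictMono w where
  mp hw := ⟨hw.surjective, fun i j hij =>
    (hw.monotone i j hij.le).lt_of_ne fun h => hij.not_ge (hw.symm_of_eq i j hij.le h)⟩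
  mpr := fun ⟨hsurj, hstrict⟩ => ⟨hsurj, fun _ _ hij => hstrict.monotone hij,
    fun _ _ hij h => not_not.1 fun hji => (hstrict (hij.lt_of_not_ge hji)).ne h⟩

theorem le_card [Fintype α] {r : α → α → Prop} {w : α → Fin k} (hw : IsStrictPackedWord r w) :
    k ≤ Fintype.card α := by
  simpa using Fintype.card_le_of_surjective w hw.surjective

theorem comp_toAntisymmetrization_iff [Preorder α] {w : Antisymmetrization α (· ≤ ·) → Fin k} :
    IsStrictPackedWord (· ≤ ·) (w ∘ toAntisymmetrization (· ≤ ·)) ↔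
      IsStrictPackedWord (· ≤ ·) w := by
  have hmk : Function.Surjective (toAntisymmetrization (α := α) (· ≤ ·)) := Quotient.mk_surjective
  constructor
  · exact fun hw => ⟨hw.surjective.of_comp, hmk.forall₂.2 hw.monotone, hmk.forall₂.2 hw.symm_of_eq⟩
  · exact fun hw => ⟨hw.surjective.comp hmk, hmk.forall₂.1 hw.monotone, hmk.forall₂.1 hw.symm_of_eq⟩

end IsStrictPackedWord

open Classical in
/-- The finite set `W^str_P(k)`, for `P` the relation `r`. -/
noncomputable def strictPackedWords [Fintype α] (r : α → α → Prop) (k : ℕ) :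
    Finset (α → Fin k) :=
  {w | IsStrictPackedWord r w}

@[simp]
theorem mem_strictPackedWords [Fintype α] {r : α → α → Prop} {k : ℕ} {w : α → Fin k} :
    w ∈ strictPackedWords r k ↔ IsStrictPackedWord r w := by
  simp [strictPackedWords]

theorem card_strictPackedWords_antisymmetrization [Fintype α] [Preorder α]
    [Fintype (Antisymmetrization α (· ≤ ·))] (k : ℕ) :
    (strictPackedWords (α := Antisymmetrization α (· ≤ ·)) (· ≤ ·) k).card =
      (strictPackedWords (α := α) (· ≤ ·) k).card := by
  refine Finset.card_nbij (· ∘ toAntisymmetrization (· ≤ ·)) ?_ ?_ ?_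
  · intro w hw
    simpa [IsStrictPackedWord.comp_toAntisymmetrization_iff] using hw
  · exact (Function.Surjective.injective_comp_right Quotient.mk_surjective).injOn
  · intro w hw
    rw [Finset.mem_coe, mem_strictPackedWords] at hw
    let v : Antisymmetrization α (· ≤ ·) → Fin k :=
      Quotient.lift w fun i j h => (hw.monotone i j h.1).antisymm (hw.monotone j i h.2)
    have hv : v ∘ toAntisymmetrization (· ≤ ·) = w := rfl
    rw [← hv, IsStrictPackedWord.comp_toAntisymmetrization_iff] at hw
    exact ⟨v, by simpa using hw, hv⟩

section LastLetter

variable {k : ℕ}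

open Classical in
/-- The positions of the last letter in a word. -/
noncomputable def lastLevel [Fintype α] (w : α → Fin (k + 1)) : Finset α :=
  {x | w x = Fin.last k}

@[simp]
theorem mem_lastLevel [Fintype α] {w : α → Fin (k + 1)} {x : α} :
    x ∈ lastLevel w ↔ w x = Fin.last k := by
  simp [lastLevel]

open Classical in
/-- The word extending `v` by a new last letter at the positions in `A`. -/
noncomputable def extendLast (A : Finset α) (v : {x // x ∉ A} → Fin k) (x : α) : Fin (k + 1) :=
  if h : x ∈ A then Fin.last k else (v ⟨x, h⟩).castSucc

theorem extendLast_of_mem {A : Finset α} (v : {x // x ∉ A} → Fin k) {x : α} (hx : x ∈ A) :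
    extendLast A v x = Fin.last k :=
  dif_pos hx

@[simp]
theorem extendLast_coe {A : Finset α} (v : {x // x ∉ A} → Fin k) (x : {x // x ∉ A}) :
    extendLast A v x = (v x).castSucc :=
  dif_neg x.2

theorem extendLast_injective (A : Finset α) :
    Function.Injective (extendLast A : ({x // x ∉ A} → Fin k) → α → Fin (k + 1)) := by
  intro v v' h
  funext x
  simpa using congrFun h x

theorem lastLevel_extendLast [Fintype α] (A : Finset α) (v : {x // x ∉ A} → Fin k) :
    lastLevel (extendLast A v) = A := by
  ext x
  by_cases hx : x ∈ A
  · simp [hx, extendLast_of_mem]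
  · simpa [hx] using (extendLast_coe v ⟨x, hx⟩).trans_ne (Fin.castSucc_ne_last _)

theorem exists_extendLast_lastLevel_eq [Fintype α] (w : α → Fin (k + 1)) :
    ∃ v, extendLast (lastLevel w) v = w := by
  refine ⟨fun x => (w x).castPred (mt mem_lastLevel.2 x.2), ?_⟩
  funext x
  by_cases hx : x ∈ lastLevel w
  · rw [extendLast_of_mem _ hx, mem_lastLevel.1 hx]
  · exact (extendLast_coe _ ⟨x, hx⟩).trans (Fin.castSucc_castPred _ _)

theorem IsStrictPackedWord.lastLevel_nonempty [Fintype α] {r : α → α → Prop}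
    {w : α → Fin (k + 1)} (hw : IsStrictPackedWord r w) : (lastLevel w).Nonempty :=
  (hw.surjective (Fin.last k)).imp fun _ => mem_lastLevel.2

theorem IsStrictPackedWord.isMax_of_mem_lastLevel [Fintype α] [Preorder α] {w : α → Fin (k + 1)}
    (hw : IsStrictPackedWord (· ≤ ·) w) {x : α} (hx : x ∈ lastLevel w) : IsMax x := by
  intro y hxy
  refine hw.symm_of_eq x y hxy ((hw.monotone x y hxy).antisymm ?_)
  exact (Fin.le_last _).trans_eq (mem_lastLevel.1 hx).symm

theorem isStrictPackedWord_extendLast_iff [PartialOrder α] {A : Finset α} (hA : A.Nonempty)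
    (hmax : ∀ x ∈ A, IsMax x) {v : {x // x ∉ A} → Fin k} :
    IsStrictPackedWord (· ≤ ·) (extendLast A v) ↔ IsStrictPackedWord (· ≤ ·) v := by
  simp only [IsStrictPackedWord.iff_strictMono]
  constructor
  · rintro ⟨hsurj, hstrict⟩
    refine ⟨fun j => ?_, fun x y hxy => by simpa using hstrict (Subtype.coe_lt_coe.2 hxy)⟩
    obtain ⟨x, hx⟩ := hsurj j.castSucc
    have hxA : x ∉ A := fun h => j.castSucc_ne_last (hx.symm.trans (extendLast_of_mem v h))
    refine ⟨⟨x, hxA⟩, Fin.castSucc_injective k ?_⟩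
    rw [← extendLast_coe, hx]
  · rintro ⟨hsurj, hstrict⟩
    constructor
    · intro j
      induction j using Fin.lastCases with
      | last => exact hA.imp fun _ => extendLast_of_mem v
      | cast j =>
        obtain ⟨x, rfl⟩ := hsurj j
        exact ⟨x, extendLast_coe v x⟩
    · intro x y hxy
      lift x to {x // x ∉ A} using fun hx => (hmax x hx).not_lt hxy
      by_cases hy : y ∈ A
      · rw [extendLast_of_mem v hy, extendLast_coe]
        exact Fin.castSucc_lt_last _
      · lift y to {x // x ∉ A} using hy
        simpa using hstrict (Subtype.coe_lt_coe.1 hxy)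

end LastLetter

section SignedCount

open Classical in
/-- The sets that can carry the last letter of a strict packed word. -/
noncomputable def nonemptyMaxSubsets (α : Type*) [Fintype α] [Preorder α] : Finset (Finset α) :=
  ({x | IsMax x} : Finset α).powerset.erase ∅

@[simp]
theorem mem_nonemptyMaxSubsets [Fintype α] [Preorder α] {A : Finset α} :
    A ∈ nonemptyMaxSubsets α ↔ A.Nonempty ∧ ∀ x ∈ A, IsMax x := by
  simp [nonemptyMaxSubsets, Finset.nonempty_iff_ne_empty, Finset.subset_iff]

theorem sum_nonemptyMaxSubsets_neg_one_pow_card [Fintype α] [Preorder α] [Nonempty α] :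
    ∑ A ∈ nonemptyMaxSubsets α, (-1 : ℤ) ^ A.card = -1 := by
  classical
  obtain ⟨x, hx⟩ := Finset.exists_maximal (Finset.univ_nonempty (α := α))
  have hxmax : IsMax x := fun y hxy => hx.2 (Finset.mem_univ y) hxy
  have hsum := Finset.sum_powerset_neg_one_pow_card_of_nonempty
    (x := ({x | IsMax x} : Finset α)) ⟨x, by simpa using hxmax⟩
  rw [← Finset.add_sum_erase _ _ (Finset.empty_mem_powerset _), Finset.card_empty, pow_zero] at hsum
  unfold nonemptyMaxSubsets
  convert eq_neg_of_add_eq_zero_right hsum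

open Classical in
theorem card_strictPackedWords_succ [Fintype α] [PartialOrder α] (k : ℕ) :
    (strictPackedWords (α := α) (· ≤ ·) (k + 1)).card =
      ∑ A ∈ nonemptyMaxSubsets α, (strictPackedWords (α := {x // x ∉ A}) (· ≤ ·) k).card := by
  rw [Finset.card_eq_sum_card_fiberwise (f := lastLevel) (t := nonemptyMaxSubsets α)]
  · refine Finset.sum_congr rfl fun A hA => ?_
    obtain ⟨hne, hmax⟩ := mem_nonemptyMaxSubsets.1 hA
    rw [← Finset.card_image_of_injective _ (extendLast_injective A)]
    congr 1
    ext w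
    simp only [Finset.mem_filter, Finset.mem_image, mem_strictPackedWords]
    constructor
    · rintro ⟨hw, rfl⟩
      obtain ⟨v, hv⟩ := exists_extendLast_lastLevel_eq w
      exact ⟨v, (isStrictPackedWord_extendLast_iff hne hmax).1 (hv.symm ▸ hw), hv⟩
    · rintro ⟨v, hv, rfl⟩
      exact ⟨(isStrictPackedWord_extendLast_iff hne hmax).2 hv, lastLevel_extendLast A v⟩
  · intro w hw
    rw [Finset.mem_coe, mem_strictPackedWords] at hw
    exact mem_nonemptyMaxSubsets.2 ⟨hw.lastLevel_nonempty, fun _ => hw.isMax_of_mem_lastLevel⟩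

theorem card_strictPackedWords_zero_of_isEmpty [Fintype α] [IsEmpty α] (r : α → α → Prop) :
    (strictPackedWords r 0).card = 1 := by
  refine Finset.card_eq_one.2 ⟨isEmptyElim, Finset.eq_singleton_iff_unique_mem.2 ⟨?_, ?_⟩⟩
  · exact mem_strictPackedWords.2 ⟨fun j => j.elim0, isEmptyElim, isEmptyElim⟩
  · exact fun w _ => Subsingleton.elim w _

theorem strictPackedWords_zero_of_nonempty [Fintype α] [Nonempty α] (r : α → α → Prop) :
    strictPackedWords r 0 = ∅ :=
  Finset.eq_empty_of_forall_notMem fun w _ => (w (Classical.arbitrary α)).elim0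

theorem strictPackedWords_eq_empty_of_card_lt [Fintype α] (r : α → α → Prop) {k : ℕ}
    (hk : Fintype.card α < k) : strictPackedWords r k = ∅ :=
  Finset.eq_empty_of_forall_notMem fun _ hw => (mem_strictPackedWords.1 hw).le_card.not_gt hk

theorem sum_neg_one_pow_mul_card_strictPackedWords_of_partialOrder [Fintype α] [PartialOrder α]
    {N : ℕ} (hN : Fintype.card α ≤ N) :
    ∑ k ∈ Finset.range (N + 1), (-1 : ℤ) ^ k * (strictPackedWords (α := α) (· ≤ ·) k).card =
      (-1) ^ Fintype.card α := by
  classical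
  induction N generalizing α with
  | zero =>
    have : IsEmpty α := Fintype.card_eq_zero_iff.1 (Nat.le_zero.1 hN)
    simp [card_strictPackedWords_zero_of_isEmpty]
  | succ N ih =>
    rw [Finset.sum_range_succ']
    rcases isEmpty_or_nonempty α with hα | hα
    · simp [card_strictPackedWords_zero_of_isEmpty, strictPackedWords_eq_empty_of_card_lt]
    have hdelete : ∀ A ∈ nonemptyMaxSubsets α,
        ∑ k ∈ Finset.range (N + 1),
            (-1 : ℤ) ^ k * (strictPackedWords (α := {x // x ∉ A}) (· ≤ ·) k).card =
          (-1) ^ Fintype.card α * (-1) ^ A.card := by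
      intro A hA
      have hcard : Fintype.card {x // x ∉ A} + A.card = Fintype.card α := by
        rw [Fintype.card_subtype_compl, Fintype.card_coe, Nat.sub_add_cancel A.card_le_univ]
      have hpos : 0 < A.card := (mem_nonemptyMaxSubsets.1 hA).1.card_pos
      rw [ih (by omega), ← hcard, pow_add, mul_assoc, ← mul_pow]
      simp
    calc
      _ = -∑ A ∈ nonemptyMaxSubsets α, ∑ k ∈ Finset.range (N + 1),
            (-1 : ℤ) ^ k * (strictPackedWords (α := {x // x ∉ A}) (· ≤ ·) k).card := by
        simp only [strictPackedWords_zero_of_nonempty, Finset.card_empty, Nat.cast_zero, mul_zero,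
          add_zero, card_strictPackedWords_succ, Nat.cast_sum, pow_succ, mul_neg_one, neg_mul,
          Finset.sum_neg_distrib, Finset.mul_sum]
        rw [Finset.sum_comm]
      _ = -((-1) ^ Fintype.card α * ∑ A ∈ nonemptyMaxSubsets α, (-1) ^ A.card) := by
        rw [Finset.sum_congr rfl hdelete, Finset.mul_sum]
      _ = (-1) ^ Fintype.card α := by
        rw [sum_nonemptyMaxSubsets_neg_one_pow_card, mul_neg_one, neg_neg]

theorem sum_neg_one_pow_mul_card_strictPackedWords [Fintype α] (r : α → α → Prop)
    [IsPreorder α r] :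
    ∑ k ∈ Finset.range (Fintype.card α + 1), (-1 : ℤ) ^ k * (strictPackedWords r k).card =
      (-1) ^ Nat.card (Antisymmetrization α r) := by
  let _ : Preorder α := { le := r, le_refl := refl_of r, le_trans := fun _ _ _ => trans_of r }
  have hmk : Function.Surjective (toAntisymmetrization (α := α) (· ≤ ·)) := Quotient.mk_surjective
  have : Finite (Antisymmetrization α (· ≤ ·)) := .of_surjective _ hmk
  have := Fintype.ofFinite (Antisymmetrization α (· ≤ ·))
  change ∑ k ∈ _, (-1 : ℤ) ^ k * (strictPackedWords (α := α) (· ≤ ·) k).card =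
    (-1) ^ Nat.card (Antisymmetrization α (· ≤ ·))
  simp only [← card_strictPackedWords_antisymmetrization]
  rw [sum_neg_one_pow_mul_card_strictPackedWords_of_partialOrder
    (Fintype.card_le_of_surjective _ hmk), Nat.card_eq_fintype_card]

open Classical in
theorem finsum_isStrictPackedWord [Finite α] (r : α → α → Prop) [IsPreorder α r] :
    ∑ᶠ w : Σ k : ℕ, α → Fin k, (if IsStrictPackedWord r w.2 then (-1 : ℤ) ^ w.1 else 0) =
      (-1) ^ Nat.card (Antisymmetrization α r) := by
  have := Fintype.ofFinite α
  rw [← sum_neg_one_pow_mul_card_strictPackedWords, finsum_eq_sum_of_support_subset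
    (s := (Finset.range (Fintype.card α + 1)).sigma fun k => (Finset.univ : Finset (α → Fin k)))]
  · rw [Finset.sum_sigma]
    refine Finset.sum_congr rfl fun k _ => ?_
    simp [strictPackedWords, Finset.sum_ite, mul_comm]
  · intro w hw
    have hword : IsStrictPackedWord r w.2 := not_not.1 fun h => hw (if_neg h)
    simpa [Nat.lt_succ_iff] using hword.le_card

end SignedCount

section Factorization

theorem exists_monotone_eq_comp_iff {γ : Type*} [LinearOrder β] [LinearOrder γ] {u : α → β}
    {w : α → γ} (hw : Function.Surjective w) :
    (∃ σ : γ → β, Monotone σ ∧ u = σ ∘ w) ↔ ∀ i j, u i < u j → w i < w j := by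
  constructor
  · rintro ⟨σ, hσ, rfl⟩ i j
    exact hσ.reflect_lt
  · intro h
    have hle : ∀ i j, w i ≤ w j → u i ≤ u j := fun i j => le_imp_le_of_lt_imp_lt (h j i)
    have hinv := Function.rightInverse_surjInv hw
    refine ⟨u ∘ Function.surjInv hw, fun a b hab => hle _ _ (by rwa [hinv, hinv]), ?_⟩
    funext i
    exact le_antisymm (hle _ _ (hinv (w i)).ge) (hle _ _ (hinv (w i)).le)

theorem isStrictPackedWord_and_exists_monotone_iff {r : α → α → Prop} {u : α → β} [Preorder β]
    (hu : Function.Surjective u) {k : ℕ} {w : α → Fin k} :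
    (IsStrictPackedWord r w ∧ ∃ σ : Fin k → β, Monotone σ ∧ u = σ ∘ w) ↔
      Function.Surjective w ∧ (∀ i j, r i j → w i ≤ w j) ∧ (∀ i j, r i j → w i = w j → r j i) ∧
        ∃ σ : Fin k → β, Monotone σ ∧ Function.Surjective σ ∧ u = σ ∘ w where
  mp := fun ⟨hw, σ, hσ, h⟩ =>
    ⟨hw.surjective, hw.monotone, hw.symm_of_eq, σ, hσ, (h ▸ hu).of_comp, h⟩
  mpr := fun ⟨hsurj, hmono, hsymm, σ, hσ, _, h⟩ => ⟨⟨hsurj, hmono, hsymm⟩, σ, hσ, h⟩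

/-- The relation comparing first the values of `u` and then, where these agree, by `r`. -/
def lexRefinement [LT β] (u : α → β) (r : α → α → Prop) (i j : α) : Prop :=
  u i < u j ∨ u i = u j ∧ r i j

instance [Preorder β] (u : α → β) (r : α → α → Prop) [IsPreorder α r] :
    IsPreorder α (lexRefinement u r) where
  refl i := .inr ⟨rfl, refl_of r i⟩
  trans i j l := by
    rintro (hij | ⟨hij, hij'⟩) (hjl | ⟨hjl, hjl'⟩)
    · exact .inl (hij.trans hjl)
    · exact .inl (hij.trans_eq hjl)
    · exact .inl (hij.trans_lt hjl)
    · exact .inr ⟨hij.trans hjl, trans_of r hij' hjl'⟩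

variable {u : α → β} {r : α → α → Prop}

theorem lexRefinement.rel [Preorder β] {i j : α} (h : lexRefinement u r i j) (hji : u j ≤ u i) :
    r i j :=
  (h.resolve_left hji.not_gt).2

theorem lexRefinement.le [Preorder β] {i j : α} (h : lexRefinement u r i j) : u i ≤ u j :=
  h.elim le_of_lt fun h => h.1.le

theorem lexRefinement_of_rel [PartialOrder β] (hu : ∀ i j, r i j → u i ≤ u j) {i j : α}
    (hij : r i j) : lexRefinement u r i j :=
  (hu i j hij).lt_or_eq.imp_right fun h => ⟨h, hij⟩

theorem antisymmRel_lexRefinement_iff [PartialOrder β] (hu : ∀ i j, r i j → u i ≤ u j)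
    {i j : α} : AntisymmRel (lexRefinement u r) i j ↔ AntisymmRel r i j :=
  ⟨fun ⟨hij, hji⟩ => ⟨hij.rel hji.le, hji.rel hij.le⟩,
    fun ⟨hij, hji⟩ => ⟨lexRefinement_of_rel hu hij, lexRefinement_of_rel hu hji⟩⟩

theorem card_antisymmetrization_lexRefinement [PartialOrder β] [IsPreorder α r]
    (hu : ∀ i j, r i j → u i ≤ u j) :
    Nat.card (Antisymmetrization α (lexRefinement u r)) = Nat.card (Antisymmetrization α r) :=
  Nat.card_congr <| Quotient.congrRight fun _ _ => antisymmRel_lexRefinement_iff hu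

theorem isStrictPackedWord_lexRefinement_iff [LinearOrder β] (hu : ∀ i j, r i j → u i ≤ u j)
    {k : ℕ} {w : α → Fin k} :
    IsStrictPackedWord (lexRefinement u r) w ↔
      IsStrictPackedWord r w ∧ ∃ σ : Fin k → β, Monotone σ ∧ u = σ ∘ w := by
  constructor
  · intro hw
    have hlt : ∀ i j, u i < u j → w i < w j := fun i j hij =>
      (hw.monotone i j (.inl hij)).lt_of_ne fun h =>
        (hw.symm_of_eq i j (.inl hij) h).le.not_gt hij
    refine ⟨⟨hw.surjective, fun i j hij => hw.monotone i j (lexRefinement_of_rel hu hij), ?_⟩,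
      (exists_monotone_eq_comp_iff hw.surjective).2 hlt⟩
    exact fun i j hij h => (hw.symm_of_eq i j (lexRefinement_of_rel hu hij) h).rel (hu i j hij)
  · rintro ⟨hw, hfactor⟩
    have hlt := (exists_monotone_eq_comp_iff hw.surjective).1 hfactor
    refine ⟨hw.surjective, ?_, ?_⟩
    · rintro i j (huij | ⟨-, hij⟩)
      · exact (hlt i j huij).le
      · exact hw.monotone i j hij
    · rintro i j (huij | ⟨huij, hij⟩) h
      · exact absurd h (hlt i j huij).ne
      · exact .inr ⟨huij.symm, hw.symm_of_eq i j hij h⟩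

end Factorization

open Classical in
theorem noncommutative_duality_general [Finite α] [LinearOrder β] (r : α → α → Prop)
    [IsPreorder α r] (u : α → β) :
    (if (∀ i j, r i j → u i ≤ u j) then (1 : ℤ) else 0) =
      (-1) ^ Nat.card (Antisymmetrization α r) *
        ∑ᶠ w : Σ k : ℕ, α → Fin k,
          if IsStrictPackedWord r w.2 ∧ ∃ σ : Fin w.1 → β, Monotone σ ∧ u = σ ∘ w.2 then
            (-1 : ℤ) ^ w.1
          else 0 := by
  by_cases hu : ∀ i j, r i j → u i ≤ u j
  · simp only [if_pos hu, ← isStrictPackedWord_lexRefinement_iff hu]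
    rw [finsum_isStrictPackedWord, card_antisymmetrization_lexRefinement hu, ← mul_pow,
      neg_one_mul, neg_neg, one_pow]
  · rw [if_neg hu, finsum_eq_zero_of_forall_eq_zero, mul_zero]
    refine fun w => if_neg ?_
    rintro ⟨hw, σ, hσ, rfl⟩
    exact hu fun i j hij => hσ (hw.monotone i j hij)

open Classical in
/-- Non-commutative duality principle, combinatorial form: for a quasi-poset `P` on
`[n]` and a surjection `u : Fin n → Fin m`,
`[u ∈ W_P] = (-1)^{cl(P)} · Σ_{w ∈ W^str_P, u = σ∘w for a non-decreasing surjection σ}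
(-1)^{max(w)}`. -/
theorem noncommutative_duality {n m : ℕ} (le : Fin n → Fin n → Prop)
    (hrefl : ∀ i, le i i)
    (htrans : ∀ i j k, le i j → le j k → le i k)
    (u : Fin n → Fin m) (hu : Function.Surjective u) :
    (if (∀ i j, le i j → u i ≤ u j) then (1 : ℤ) else 0) =
      (-1) ^ clQP le *
        ∑ᶠ w : Σ k : ℕ, Fin n → Fin k,
          if (Function.Surjective w.2 ∧
              (∀ i j, le i j → w.2 i ≤ w.2 j) ∧
              (∀ i j, le i j → w.2 i = w.2 j → le j i) ∧
              ∃ σ : Fin w.1 → Fin m, Monotone σ ∧ Function.Surjective σ ∧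
                u = σ ∘ w.2) then
            ((-1 : ℤ)) ^ w.1
          else 0 := by
  have : IsPreorder (Fin n) le := { refl := hrefl, trans := htrans }
  simp only [← isStrictPackedWord_and_exists_monotone_iff hu]
  have hcl : clQP le = Nat.card (Antisymmetrization (Fin n) le) := rfl
  rw [hcl]
  convert noncommutative_duality_general le u
end

section
/- For every quasi-poset P on [n] and all integers k, l ≥ 0: #L_P(k+l) = Σ_{O ∈ top(P)} #L_{P|(Fin n ∖ O)}(k) · #L_{P|O}(l), where the sum ranges over all open sets O of P (including ∅ and Fin n). -/
/-- Number of monotone maps `B → Fin k` for the restriction of `le` to `B`. -/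
noncomputable def LCountOn {n : ℕ} (le : Fin n → Fin n → Prop) (B : Set (Fin n))
    (k : ℕ) : ℕ :=
  Nat.card {f : B → Fin k // ∀ i j : B, le i.1 j.1 → f i ≤ f j}

/-!
A monotone map `f` into an ordinal sum `β ⊕ γ` is determined by the set `O = f ⁻¹' γ` and by the
restrictions of `f` to `Oᶜ` and `O`, which take values in `β` and `γ`. The set `O` is open, because
no element of `γ` lies below an element of `β`; conversely, over an open `O` any two monotone
restrictions glue. The theorem counts both sides for `Fin (k + l)`, the ordinal sum of `Fin k` and
`Fin l`.
-/

section SumLex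

variable {α β γ : Type*} {r : α → α → Prop} {s : β → β → Prop} {t : γ → γ → Prop} {O : Set α}

theorem lex_getLeft {x y : β ⊕ γ} (h : Sum.Lex s t x y) (hx : x.isLeft) (hy : y.isLeft) :
    s (x.getLeft hx) (y.getLeft hy) := by
  cases h with
  | inl h => exact h
  | inr => cases hx
  | sep => cases hy

theorem lex_getRight {x y : β ⊕ γ} (h : Sum.Lex s t x y) (hx : x.isRight) (hy : y.isRight) :
    t (x.getRight hx) (y.getRight hy) := by
  cases h with
  | inl => cases hx
  | inr h => exact h
  | sep => cases hx

theorem isRight_of_lex {x y : β ⊕ γ} (h : Sum.Lex s t x y) (hx : x.isRight) : y.isRight := by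
  cases h with
  | inl => cases hx
  | inr => rfl
  | sep => rfl

/-- Open sets (upper sets) of an arbitrary relation; Mathlib's `IsUpperSet` only refers to the
`≤` of an instance. An `abbrev`, so that instance search finds the decidability of the quantifiers
over a finite type. -/
abbrev IsUpClosed (r : α → α → Prop) (O : Set α) : Prop :=
  ∀ a ∈ O, ∀ b, r a b → b ∈ O

/-- The open set associated with a monotone map into an ordinal sum: the points sent to the upper
summand. -/
def upperPart (f : r →r Sum.Lex s t) : Set α :=
  {a | (f a).isRight}

theorem isUpClosed_upperPart (f : r →r Sum.Lex s t) : IsUpClosed r (upperPart f) :=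
  fun _ ha _ hab => isRight_of_lex (f.map_rel hab) ha

/-- The restriction of a monotone map into an ordinal sum to the points sent to the lower summand.
The set `O` is a variable, so that the restrictions of all maps with the same upper part have the
same type. -/
def restrictLower (f : r →r Sum.Lex s t) (hf : upperPart f = O) : Subrel r (· ∈ Oᶜ) →r s where
  toFun a := (f a).getLeft (Sum.not_isRight.mp fun h => a.2 (hf ▸ h))
  map_rel' hab := lex_getLeft (f.map_rel hab) _ _

/-- The counterpart of `restrictLower` for the upper summand. -/
def restrictUpper (f : r →r Sum.Lex s t) (hf : upperPart f = O) : Subrel r (· ∈ O) →r t where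
  toFun a := (f a).getRight (hf.superset a.2)
  map_rel' hab := lex_getRight (f.map_rel hab) _ _

open Classical in
/-- The monotone map into an ordinal sum glued from monotone maps on an open set and on its
complement. -/
noncomputable def glue (hO : IsUpClosed r O) (f : Subrel r (· ∈ Oᶜ) →r s)
    (g : Subrel r (· ∈ O) →r t) : r →r Sum.Lex s t where
  toFun a := if ha : a ∈ O then Sum.inr (g ⟨a, ha⟩) else Sum.inl (f ⟨a, ha⟩)
  map_rel' {a b} hab := by
    by_cases ha : a ∈ O
    · have hb : b ∈ O := hO a ha b hab
      simpa only [dif_pos ha, dif_pos hb] using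
        Sum.Lex.inr (g.map_rel (a := ⟨a, ha⟩) (b := ⟨b, hb⟩) hab)
    · by_cases hb : b ∈ O
      · simpa only [dif_neg ha, dif_pos hb] using Sum.Lex.sep _ _
      · simpa only [dif_neg ha, dif_neg hb] using
          Sum.Lex.inl (f.map_rel (a := ⟨a, ha⟩) (b := ⟨b, hb⟩) hab)

theorem glue_apply_of_mem (hO : IsUpClosed r O) (f : Subrel r (· ∈ Oᶜ) →r s)
    (g : Subrel r (· ∈ O) →r t) {a : α} (ha : a ∈ O) : glue hO f g a = Sum.inr (g ⟨a, ha⟩) :=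
  dif_pos ha

theorem glue_apply_of_notMem (hO : IsUpClosed r O) (f : Subrel r (· ∈ Oᶜ) →r s)
    (g : Subrel r (· ∈ O) →r t) {a : α} (ha : a ∉ O) : glue hO f g a = Sum.inl (f ⟨a, ha⟩) :=
  dif_neg ha

theorem upperPart_glue (hO : IsUpClosed r O) (f : Subrel r (· ∈ Oᶜ) →r s)
    (g : Subrel r (· ∈ O) →r t) : upperPart (glue hO f g) = O := by
  ext a
  by_cases ha : a ∈ O
  · simp [upperPart, glue_apply_of_mem, ha]
  · simp [upperPart, glue_apply_of_notMem, ha]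

theorem glue_restrict (hO : IsUpClosed r O) (f : r →r Sum.Lex s t) (hf : upperPart f = O) :
    glue hO (restrictLower f hf) (restrictUpper f hf) = f := by
  ext a
  by_cases ha : a ∈ O
  · rw [glue_apply_of_mem hO _ _ ha]
    exact Sum.inr_getRight _ _
  · rw [glue_apply_of_notMem hO _ _ ha]
    exact Sum.inl_getLeft _ _

theorem restrictLower_glue (hO : IsUpClosed r O) (f : Subrel r (· ∈ Oᶜ) →r s)
    (g : Subrel r (· ∈ O) →r t) :
    restrictLower (glue hO f g) (upperPart_glue hO f g) = f := by
  ext a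
  exact Sum.getLeft_eq_iff _ |>.mpr (glue_apply_of_notMem hO f g a.2)

theorem restrictUpper_glue (hO : IsUpClosed r O) (f : Subrel r (· ∈ Oᶜ) →r s)
    (g : Subrel r (· ∈ O) →r t) :
    restrictUpper (glue hO f g) (upperPart_glue hO f g) = g := by
  ext a
  exact Sum.getRight_eq_iff _ |>.mpr (glue_apply_of_mem hO f g a.2)

/-- The monotone maps into an ordinal sum with a given open set `O` as upper part, identified with
the pairs of their restrictions to `Oᶜ` and `O`. -/
noncomputable def upperPartFiberEquiv (hO : IsUpClosed r O) :
    {f : r →r Sum.Lex s t // upperPart f = O} ≃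
      (Subrel r (· ∈ Oᶜ) →r s) × (Subrel r (· ∈ O) →r t) where
  toFun f := (restrictLower f.1 f.2, restrictUpper f.1 f.2)
  invFun p := ⟨glue hO p.1 p.2, upperPart_glue hO p.1 p.2⟩
  left_inv f := Subtype.ext (glue_restrict hO f.1 f.2)
  right_inv p := Prod.ext (restrictLower_glue hO p.1 p.2) (restrictUpper_glue hO p.1 p.2)

theorem card_upperPart_fiber (r : α → α → Prop) (s : β → β → Prop) (t : γ → γ → Prop)
    (O : Set α) [Decidable (IsUpClosed r O)] :
    Nat.card {f : r →r Sum.Lex s t // upperPart f = O} =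
      if IsUpClosed r O then
        Nat.card (Subrel r (· ∈ Oᶜ) →r s) * Nat.card (Subrel r (· ∈ O) →r t)
      else 0 := by
  split_ifs with hO
  · rw [Nat.card_congr (upperPartFiberEquiv hO), Nat.card_prod]
  · have : IsEmpty {f : r →r Sum.Lex s t // upperPart f = O} :=
      ⟨fun f => hO (f.2 ▸ isUpClosed_upperPart f.1)⟩
    exact Nat.card_of_isEmpty

theorem LCount_add_general [Finite α] [Finite β] [Finite γ] (r : α → α → Prop)
    [DecidablePred (IsUpClosed r)] (s : β → β → Prop) (t : γ → γ → Prop) :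
    Nat.card (r →r Sum.Lex s t) =
      ∑ᶠ O : Set α,
        if IsUpClosed r O then
          Nat.card (Subrel r (· ∈ Oᶜ) →r s) * Nat.card (Subrel r (· ∈ O) →r t)
        else 0 := by
  have := Fintype.ofFinite (Set α)
  have : Finite (r →r Sum.Lex s t) := DFunLike.finite _
  calc Nat.card (r →r Sum.Lex s t)
    _ = Nat.card (Σ O : Set α, {f : r →r Sum.Lex s t // upperPart f = O}) :=
      Nat.card_congr (Equiv.sigmaFiberEquiv upperPart).symm
    _ = ∑ O : Set α, Nat.card {f : r →r Sum.Lex s t // upperPart f = O} := Nat.card_sigma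
    _ = ∑ᶠ O : Set α, Nat.card {f : r →r Sum.Lex s t // upperPart f = O} :=
      (finsum_eq_sum_of_fintype _).symm
    _ = ∑ᶠ O : Set α,
          if IsUpClosed r O then
            Nat.card (Subrel r (· ∈ Oᶜ) →r s) * Nat.card (Subrel r (· ∈ O) →r t)
          else 0 :=
      finsum_congr fun O => card_upperPart_fiber r s t O

end SumLex

/-- The set of monotone maps in its unbundled form, as it appears in `LCount` and `LCountOn`,
identified with the bundled relation homomorphisms. -/
def subtypeEquivRelHom {α β : Type*} (r : α → α → Prop) (s : β → β → Prop) :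
    {f : α → β // ∀ a b, r a b → s (f a) (f b)} ≃ (r →r s) where
  toFun f := ⟨f.1, f.2 _ _⟩
  invFun f := ⟨f, fun _ _ => f.map_rel⟩

theorem LCount_eq_card_relHom {n : ℕ} (le : Fin n → Fin n → Prop) (k : ℕ) :
    LCount le k = Nat.card (le →r ((· ≤ ·) : Fin k → Fin k → Prop)) :=
  Nat.card_congr (subtypeEquivRelHom le (· ≤ ·))

theorem LCountOn_eq_card_relHom {n : ℕ} (le : Fin n → Fin n → Prop) (B : Set (Fin n)) (k : ℕ) :
    LCountOn le B k = Nat.card (Subrel le (· ∈ B) →r ((· ≤ ·) : Fin k → Fin k → Prop)) :=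
  Nat.card_congr (subtypeEquivRelHom (Subrel le (· ∈ B)) (· ≤ ·))

/-- `Fin (k + l)` as the ordinal sum of `Fin k` and `Fin l`. -/
def finSumLexRelIso (k l : ℕ) :
    Sum.Lex ((· ≤ ·) : Fin k → Fin k → Prop) ((· ≤ ·) : Fin l → Fin l → Prop) ≃r
      ((· ≤ ·) : Fin (k + l) → Fin (k + l) → Prop) where
  toEquiv := finSumFinEquiv
  map_rel_iff' {x y} := by
    rcases x with i | i <;> rcases y with j | j
    · simp only [finSumFinEquiv_apply_left, Fin.le_def, Fin.val_castAdd, Sum.lex_inl_inl]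
    · simp only [finSumFinEquiv_apply_left, finSumFinEquiv_apply_right, Fin.le_def,
        Fin.val_castAdd, Fin.val_natAdd, Sum.Lex.sep, iff_true]
      omega
    · simp only [finSumFinEquiv_apply_left, finSumFinEquiv_apply_right, Fin.le_def,
        Fin.val_castAdd, Fin.val_natAdd, Sum.lex_inr_inl, iff_false]
      omega
    · simp only [finSumFinEquiv_apply_right, Fin.le_def, Fin.val_natAdd, Sum.lex_inr_inr,
        Nat.add_le_add_iff_left]

open Classical in
/-- `#L_P(k+l) = Σ_{O ∈ top(P)} #L_{P|(Fin n ∖ O)}(k) · #L_{P|O}(l)`. -/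
theorem LCount_add {n : ℕ} (le : Fin n → Fin n → Prop)
    (hrefl : ∀ i, le i i)
    (htrans : ∀ i j k, le i j → le j k → le i k)
    (k l : ℕ) :
    LCount le (k + l) =
      ∑ᶠ O : Set (Fin n),
        if (∀ i ∈ O, ∀ j, le i j → j ∈ O) then
          LCountOn le Oᶜ k * LCountOn le O l
        else 0 := by
  simp only [LCount_eq_card_relHom, LCountOn_eq_card_relHom]
  exact (Nat.card_congr ((RelIso.refl le).relHomCongr (finSumLexRelIso k l))).symm.trans
    (LCount_add_general le (· ≤ ·) (· ≤ ·))
end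

section
/- For every quasi-poset P on [n] and all integers k, l ≥ 0: #L^str_P(k+l) = Σ_{O ∈ top(P)} #L^str_{P|(Fin n ∖ O)}(k) · #L^str_{P|O}(l), where the sum ranges over all open sets O of P (including ∅ and Fin n). -/
/-- Number of elements of `L^str(k)` for the restriction of `le` to `B`. -/
noncomputable def LstrCountOn {n : ℕ} (le : Fin n → Fin n → Prop) (B : Set (Fin n))
    (k : ℕ) : ℕ :=
  Nat.card {f : B → Fin k //
    (∀ i j : B, le i.1 j.1 → f i ≤ f j) ∧
    (∀ i j : B, le i.1 j.1 → f i = f j → le j.1 i.1)}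

/-!
A strict labelling with values in an ordered sum `β ⊕ₗ γ` is determined by the set `O` of points
sent to `γ` together with its restrictions to `Oᶜ` and to `O`. Conversely, labellings of `Oᶜ` by `β`
and of `O` by `γ` glue to a strict labelling exactly when both are strict and `O` is open: a
relation from `O` to `Oᶜ` would have to decrease the label, while a relation from `Oᶜ` to `O`
strictly increases it and so imposes no condition. The theorem is the case
`Fin k ⊕ₗ Fin l ≃o Fin (k + l)`.
-/

section StrictLabelling

open Sum.Lex

/-- `finSumFinEquiv` as an order isomorphism from the ordered sum. -/
def finSumLexOrderIso (k l : ℕ) : Fin k ⊕ₗ Fin l ≃o Fin (k + l) where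
  toEquiv := ofLex.trans finSumFinEquiv
  map_rel_iff' {a b} := by
    have castAdd_lt_natAdd (i : Fin k) (j : Fin l) : i.castAdd l < j.natAdd k :=
      i.2.trans_le (Nat.le_add_right k j)
    induction a with | h a
    induction b with | h b
    rcases a with a | a <;> rcases b with b | b
    · exact (Fin.strictMono_castAdd l).le_iff_le.trans inl_le_inl_iff.symm
    · exact iff_of_true (castAdd_lt_natAdd a b).le (inl_le_inr a b)
    · exact iff_of_false (castAdd_lt_natAdd b a).not_ge not_inr_le_inl
    · exact (Fin.strictMono_natAdd k).le_iff_le.trans inr_le_inr_iff.symm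

variable {α β γ : Type*}

/-- The open sets (upper sets) of a relation `r`. Mathlib's `IsUpperSet` is not used because it
takes the relation from an `LE` instance. -/
def IsOpenFor (r : α → α → Prop) (O : Set α) : Prop :=
  ∀ a ∈ O, ∀ b, r a b → b ∈ O

/-- The defining condition of `L^str`, for labels in any ordered type: `f` is monotone, and takes
equal values on related points only if these are equivalent. -/
def IsStrictLabelling [LE β] (r : α → α → Prop) (f : α → β) : Prop :=
  (∀ a b, r a b → f a ≤ f b) ∧ ∀ a b, r a b → f a = f b → r b a

theorem isStrictLabelling_orderEmbedding_comp [LE β] [LE γ] (r : α → α → Prop) (e : β ↪o γ)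
    (f : α → β) : IsStrictLabelling r (e ∘ f) ↔ IsStrictLabelling r f := by
  simp only [IsStrictLabelling, Function.comp_apply, e.map_rel_iff, e.injective.eq_iff]

theorem card_isStrictLabelling_congr [LE β] [LE γ] (r : α → α → Prop) (e : β ≃o γ) :
    Nat.card {f : α → β // IsStrictLabelling r f} =
      Nat.card {f : α → γ // IsStrictLabelling r f} :=
  Nat.card_congr <| ((Equiv.refl α).arrowCongr e.toEquiv).subtypeEquiv fun f =>
    (isStrictLabelling_orderEmbedding_comp r e.toOrderEmbedding f).symm

open Classical in
/-- The map into the ordered sum given by `g` on `Oᶜ` and by `h` on `O`. -/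
noncomputable def sumLexGlue (O : Set α) (g : ↥Oᶜ → β) (h : O → γ) (a : α) : β ⊕ₗ γ :=
  if ha : a ∈ O then Sum.inrₗ (h ⟨a, ha⟩) else Sum.inlₗ (g ⟨a, ha⟩)

section Glue

variable {O : Set α} (g : ↥Oᶜ → β) (h : O → γ)

theorem sumLexGlue_of_mem {a : α} (ha : a ∈ O) : sumLexGlue O g h a = Sum.inrₗ (h ⟨a, ha⟩) :=
  dif_pos ha

theorem sumLexGlue_of_notMem {a : α} (ha : a ∉ O) : sumLexGlue O g h a = Sum.inlₗ (g ⟨a, ha⟩) :=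
  dif_neg ha

theorem setOf_isRight_sumLexGlue : {a | (ofLex (sumLexGlue O g h a)).isRight} = O := by
  ext a
  by_cases ha : a ∈ O
  · simp [sumLexGlue_of_mem g h ha, ha]
  · simp [sumLexGlue_of_notMem g h ha, ha]

variable {g h}

theorem eq_of_sumLexGlue_eq {O' : Set α} {g' : ↥O'ᶜ → β} {h' : O' → γ}
    (heq : sumLexGlue O g h = sumLexGlue O' g' h') : O = O' := by
  rw [← setOf_isRight_sumLexGlue g h, heq, setOf_isRight_sumLexGlue]

theorem sumLexGlue_inj {g' : ↥Oᶜ → β} {h' : O → γ} :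
    sumLexGlue O g h = sumLexGlue O g' h' ↔ g = g' ∧ h = h' := by
  refine ⟨fun heq => ⟨funext fun a => ?_, funext fun a => ?_⟩, by rintro ⟨rfl, rfl⟩; rfl⟩
  · simpa [sumLexGlue_of_notMem _ _ a.2] using congrFun heq a
  · simpa [sumLexGlue_of_mem _ _ a.2] using congrFun heq a

variable [LE β] [LE γ] {r : α → α → Prop}

theorem IsStrictLabelling.isOpenFor_of_sumLexGlue (hf : IsStrictLabelling r (sumLexGlue O g h)) :
    IsOpenFor r O := by
  intro a ha b hab
  by_contra hb
  have hle := hf.1 a b hab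
  rw [sumLexGlue_of_mem g h ha, sumLexGlue_of_notMem g h hb] at hle
  exact not_inr_le_inl hle

theorem IsStrictLabelling.left_of_sumLexGlue (hf : IsStrictLabelling r (sumLexGlue O g h)) :
    IsStrictLabelling (Subrel r (· ∈ Oᶜ)) g := by
  have hg (a : ↥Oᶜ) : sumLexGlue O g h a = Sum.inlₗ (g a) := sumLexGlue_of_notMem g h a.2
  refine ⟨fun a b hab => ?_, fun a b hab heq => hf.2 a b hab (by rw [hg, hg, heq])⟩
  simpa only [hg, inl_le_inl_iff] using hf.1 a b hab

theorem IsStrictLabelling.right_of_sumLexGlue (hf : IsStrictLabelling r (sumLexGlue O g h)) :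
    IsStrictLabelling (Subrel r (· ∈ O)) h := by
  have hh (a : O) : sumLexGlue O g h a = Sum.inrₗ (h a) := sumLexGlue_of_mem g h a.2
  refine ⟨fun a b hab => ?_, fun a b hab heq => hf.2 a b hab (by rw [hh, hh, heq])⟩
  simpa only [hh, inr_le_inr_iff] using hf.1 a b hab

theorem IsOpenFor.isStrictLabelling_sumLexGlue (hO : IsOpenFor r O)
    (hg : IsStrictLabelling (Subrel r (· ∈ Oᶜ)) g) (hh : IsStrictLabelling (Subrel r (· ∈ O)) h) :
    IsStrictLabelling r (sumLexGlue O g h) := by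
  suffices hpair : ∀ a b, r a b → sumLexGlue O g h a ≤ sumLexGlue O g h b ∧
      (sumLexGlue O g h a = sumLexGlue O g h b → r b a) from
    ⟨fun a b hab => (hpair a b hab).1, fun a b hab => (hpair a b hab).2⟩
  intro a b hab
  by_cases ha : a ∈ O
  · have hb := hO a ha b hab
    rw [sumLexGlue_of_mem g h ha, sumLexGlue_of_mem g h hb]
    exact ⟨inr_le_inr_iff.2 (hh.1 ⟨a, ha⟩ ⟨b, hb⟩ hab),
      fun heq => hh.2 ⟨a, ha⟩ ⟨b, hb⟩ hab (Sum.inr_injective heq)⟩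
  rw [sumLexGlue_of_notMem g h ha]
  by_cases hb : b ∈ O
  · rw [sumLexGlue_of_mem g h hb]
    exact ⟨inl_le_inr _ _, fun heq => (Sum.inl_ne_inr heq).elim⟩
  · rw [sumLexGlue_of_notMem g h hb]
    exact ⟨inl_le_inl_iff.2 (hg.1 ⟨a, ha⟩ ⟨b, hb⟩ hab),
      fun heq => hg.2 ⟨a, ha⟩ ⟨b, hb⟩ hab (Sum.inl_injective heq)⟩

end Glue

theorem exists_sumLexGlue_eq (f : α → β ⊕ₗ γ) :
    ∃ (O : Set α) (g : ↥Oᶜ → β) (h : O → γ), sumLexGlue O g h = f := by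
  let O : Set α := {a | (ofLex (f a)).isRight}
  refine ⟨O, fun a => (ofLex (f a)).getLeft (Sum.not_isRight.1 a.2),
    fun a => (ofLex (f a)).getRight a.2, funext fun a => ?_⟩
  by_cases ha : a ∈ O
  · rw [sumLexGlue_of_mem _ _ ha]
    exact congrArg toLex (Sum.inr_getRight _ ha)
  · rw [sumLexGlue_of_notMem _ _ ha]
    exact congrArg toLex (Sum.inl_getLeft _ (Sum.not_isRight.1 ha))

variable [LE β] [LE γ] (r : α → α → Prop)

/-- A strict labelling by an ordered sum amounts to an open set `O`, where the labels lie in the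
second summand, together with strict labellings of `Oᶜ` and `O` by the two summands. -/
noncomputable def sumLexGlueEquiv :
    (Σ O : {O : Set α // IsOpenFor r O},
      {g : ↥O.1ᶜ → β // IsStrictLabelling (Subrel r (· ∈ O.1ᶜ)) g} ×
        {h : O.1 → γ // IsStrictLabelling (Subrel r (· ∈ O.1)) h}) ≃
      {f : α → β ⊕ₗ γ // IsStrictLabelling r f} :=
  Equiv.ofBijective
    (fun ⟨O, g, h⟩ => ⟨sumLexGlue O.1 g.1 h.1, O.2.isStrictLabelling_sumLexGlue g.2 h.2⟩) <| by
    constructor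
    · rintro ⟨⟨O, hO⟩, ⟨g, hg⟩, ⟨h, hh⟩⟩ ⟨⟨O', hO'⟩, ⟨g', hg'⟩, ⟨h', hh'⟩⟩ heq
      have hglue : sumLexGlue O g h = sumLexGlue O' g' h' := congrArg Subtype.val heq
      obtain rfl : O = O' := eq_of_sumLexGlue_eq hglue
      obtain ⟨rfl, rfl⟩ := sumLexGlue_inj.1 hglue
      rfl
    · rintro ⟨f, hf⟩
      obtain ⟨O, g, h, rfl⟩ := exists_sumLexGlue_eq f
      exact ⟨⟨⟨O, hf.isOpenFor_of_sumLexGlue⟩, ⟨g, hf.left_of_sumLexGlue⟩,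
        ⟨h, hf.right_of_sumLexGlue⟩⟩, rfl⟩

theorem LstrCount_add_general [Finite α] [Finite β] [Finite γ] :
    Nat.card {f : α → β ⊕ₗ γ // IsStrictLabelling r f} =
      ∑ᶠ (O : Set α) (_ : IsOpenFor r O),
        Nat.card {g : ↥Oᶜ → β // IsStrictLabelling (Subrel r (· ∈ Oᶜ)) g} *
          Nat.card {h : O → γ // IsStrictLabelling (Subrel r (· ∈ O)) h} := by
  have := Fintype.ofFinite {O : Set α // IsOpenFor r O}
  rw [← Nat.card_congr (sumLexGlueEquiv r), Nat.card_sigma, ← finsum_subtype_eq_finsum_cond,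
    finsum_eq_sum_of_fintype]
  simp only [Nat.card_prod]

end StrictLabelling

open Classical in
/-- `#L^str_P(k+l) = Σ_{O ∈ top(P)} #L^str_{P|(Fin n ∖ O)}(k) · #L^str_{P|O}(l)`. -/
theorem LstrCount_add {n : ℕ} (le : Fin n → Fin n → Prop)
    (hrefl : ∀ i, le i i)
    (htrans : ∀ i j k, le i j → le j k → le i k)
    (k l : ℕ) :
    LstrCount le (k + l) =
      ∑ᶠ O : Set (Fin n),
        if (∀ i ∈ O, ∀ j, le i j → j ∈ O) then
          LstrCountOn le Oᶜ k * LstrCountOn le O l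
        else 0 := by
  simp only [← finsum_eq_if]
  exact (card_isStrictLabelling_congr le (finSumLexOrderIso k l)).symm.trans
    (LstrCount_add_general le)
end

section
/- Recursive computation of ehr: Let P be a quasi-poset on [n] with n ≥ 1. Then for every integer m ≥ 1: ehr_P(m) = Σ_{k=0}^{m-1} Σ_{O ∈ top(P), O ≠ ∅} ehr_{P|(Fin n ∖ O)}(k), where the inner sum ranges over all nonempty open sets O of P. -/
open Polynomial

/-!
Sort the monotone maps `f` from `P` to a chain with `k + 1` elements by the set `O` on which `f`
attains the top value. This set is open, and `f` is determined by its restriction to `Oᶜ`, which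
can be any monotone map to a chain with `k` elements. The summand `O = ∅` is `ehr_P(k)`, so the sum
over the nonempty open sets is `ehr_P(k + 1) - ehr_P(k)`; these differences telescope, starting
from `ehr_P(0) = 0`, as `P` is nonempty.
-/

section

variable {α : Type*}

/-- The maps to the chain `Fin k` that are monotone for a relation `r`: the set `L_P(k)` when
`r` is the quasi-order of `P`. Written as a subtype so that `LCount le k` and
`LCountOn le B k` unfold to the cardinalities of `MonotoneMap le k` and
`MonotoneMap (Subrel le (· ∈ B)) k`. -/
abbrev MonotoneMap (r : α → α → Prop) (k : ℕ) : Type _ :=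
  {f : α → Fin k // ∀ i j, r i j → f i ≤ f j}

/-- The open sets of a relation: the set `top(P)` when `r` is the quasi-order of `P`.
Mathlib's `UpperSet` takes its order from an `LE` instance and so does not apply to `r`. -/
def openSets (r : α → α → Prop) : Set (Set α) :=
  {O | ∀ i ∈ O, ∀ j, r i j → j ∈ O}

variable {r : α → α → Prop} {k : ℕ} {O : Set α}

theorem empty_mem_openSets : ∅ ∈ openSets r :=
  fun _ hi => hi.elim

namespace MonotoneMap

/-- The open set on which a monotone map attains the top value of `Fin (k + 1)`. -/
def topLevel (f : MonotoneMap r (k + 1)) : openSets r :=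
  ⟨{i | f.1 i = Fin.last k}, fun i (hi : f.1 i = Fin.last k) j hij =>
    Fin.last_le_iff.1 (hi ▸ f.2 i j hij)⟩

theorem mem_topLevel {f : MonotoneMap r (k + 1)} {i : α} :
    i ∈ (topLevel f).1 ↔ f.1 i = Fin.last k :=
  Iff.rfl

/-- The restriction of a monotone map to the complement of its top level, where it takes values in
`Fin k`. -/
def restrictCompl (f : MonotoneMap r (k + 1)) :
    MonotoneMap (Subrel r (· ∈ (topLevel f).1ᶜ)) k :=
  ⟨fun i => (f.1 i).castPred i.2, fun _ _ hij => Fin.castPred_le_castPred_iff.2 (f.2 _ _ hij)⟩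

open Classical in
/-- The extension of a monotone map on the complement of an open set by the new top value. -/
noncomputable def extendTop (hO : O ∈ openSets r) (g : MonotoneMap (Subrel r (· ∈ Oᶜ)) k) :
    MonotoneMap r (k + 1) where
  val i := if hi : i ∈ O then Fin.last k else (g.1 ⟨i, hi⟩).castSucc
  property i j hij := by
    by_cases hj : j ∈ O
    · simpa only [hj, dite_true] using Fin.le_last _
    · have hi : i ∉ O := fun hi => hj (hO i hi j hij)
      simpa only [hi, hj, dite_false, Fin.castSucc_le_castSucc_iff] using g.2 ⟨i, hi⟩ ⟨j, hj⟩ hij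

theorem extendTop_of_mem (hO : O ∈ openSets r) (g : MonotoneMap (Subrel r (· ∈ Oᶜ)) k) {i : α}
    (hi : i ∈ O) : (extendTop hO g).1 i = Fin.last k :=
  dif_pos hi

theorem extendTop_of_notMem (hO : O ∈ openSets r) (g : MonotoneMap (Subrel r (· ∈ Oᶜ)) k) {i : α}
    (hi : i ∉ O) : (extendTop hO g).1 i = (g.1 ⟨i, hi⟩).castSucc :=
  dif_neg hi

theorem topLevel_extendTop (hO : O ∈ openSets r) (g : MonotoneMap (Subrel r (· ∈ Oᶜ)) k) :
    topLevel (extendTop hO g) = ⟨O, hO⟩ := by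
  ext i
  by_cases hi : i ∈ O
  · simp [mem_topLevel, extendTop_of_mem hO g hi, hi]
  · simp [mem_topLevel, extendTop_of_notMem hO g hi, hi, Fin.castSucc_ne_last]

theorem extendTop_restrictCompl (f : MonotoneMap r (k + 1)) :
    extendTop (topLevel f).2 (restrictCompl f) = f := by
  ext i : 2
  by_cases hi : i ∈ (topLevel f).1
  · rw [extendTop_of_mem _ _ hi, mem_topLevel.1 hi]
  · rw [extendTop_of_notMem _ _ hi]
    exact Fin.castSucc_castPred _ hi

theorem extendTop_injective (hO : O ∈ openSets r) :
    Function.Injective (extendTop hO : MonotoneMap (Subrel r (· ∈ Oᶜ)) k → _) := by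
  intro g g' h
  ext i : 2
  have hi := congrArg (fun f => f.1 i.1) h
  simpa only [extendTop_of_notMem hO _ i.2, Fin.castSucc_inj] using hi

theorem bijective_sigma_extendTop :
    Function.Bijective fun x : Σ O : openSets r, MonotoneMap (Subrel r (· ∈ O.1ᶜ)) k =>
      extendTop x.1.2 x.2 := by
  refine ⟨?_, fun f => ⟨⟨topLevel f, restrictCompl f⟩, extendTop_restrictCompl f⟩⟩
  rintro ⟨O, g⟩ ⟨O', g'⟩ h
  obtain rfl : O = O' := by
    simpa only [topLevel_extendTop] using congrArg topLevel h
  exact congrArg (Sigma.mk O) (extendTop_injective O.2 h)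

end MonotoneMap

variable (r k)

theorem card_monotoneMap_compl_empty :
    Nat.card (MonotoneMap (Subrel r (· ∈ (∅ : Set α)ᶜ)) k) = Nat.card (MonotoneMap r k) :=
  Nat.card_congr
    { toFun g := ⟨fun i => g.1 ⟨i, Set.notMem_empty i⟩, fun _ _ hij => g.2 _ _ hij⟩
      invFun f := ⟨fun i => f.1 i, fun _ _ hij => f.2 _ _ hij⟩ }

theorem card_monotoneMap_zero [Nonempty α] : Nat.card (MonotoneMap r 0) = 0 :=
  have : IsEmpty (MonotoneMap r 0) := ⟨fun f => (f.1 (Classical.arbitrary α)).elim0⟩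
  Nat.card_of_isEmpty

variable [Finite α]

theorem card_monotoneMap_succ :
    Nat.card (MonotoneMap r (k + 1)) =
      ∑ᶠ O ∈ openSets r, Nat.card (MonotoneMap (Subrel r (· ∈ Oᶜ)) k) := by
  have := Fintype.ofFinite (openSets r)
  rw [← Nat.card_eq_of_bijective _ MonotoneMap.bijective_sigma_extendTop, Nat.card_sigma,
    ← finsum_eq_sum_of_fintype]
  exact finsum_set_coe_eq_finsum_mem
    (f := fun O => Nat.card (MonotoneMap (Subrel r (· ∈ Oᶜ)) k)) (openSets r)

theorem card_monotoneMap_succ_eq_add :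
    Nat.card (MonotoneMap r (k + 1)) = Nat.card (MonotoneMap r k) +
      ∑ᶠ O ∈ {O | O.Nonempty ∧ O ∈ openSets r},
        Nat.card (MonotoneMap (Subrel r (· ∈ Oᶜ)) k) := by
  have hsplit : openSets r = insert ∅ {O | O.Nonempty ∧ O ∈ openSets r} := by
    ext O
    rcases O.eq_empty_or_nonempty with rfl | hO
    · simp [empty_mem_openSets]
    · simp [hO, hO.ne_empty]
  rw [card_monotoneMap_succ, hsplit, finsum_mem_insert _ (by simp) (Set.toFinite _),
    card_monotoneMap_compl_empty, ← hsplit]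

theorem card_monotoneMap_eq_sum_range [Nonempty α] (m : ℕ) :
    Nat.card (MonotoneMap r m) =
      ∑ k ∈ Finset.range m, ∑ᶠ O ∈ {O | O.Nonempty ∧ O ∈ openSets r},
        Nat.card (MonotoneMap (Subrel r (· ∈ Oᶜ)) k) := by
  induction m with
  | zero => rw [card_monotoneMap_zero, Finset.sum_range_zero]
  | succ k ih => rw [card_monotoneMap_succ_eq_add, Finset.sum_range_succ, ih]

end

theorem ehr_recursive_general {α : Type*} [Finite α] [Nonempty α] (r : α → α → Prop)
    (p : ℚ[X]) (hp : ∀ k : ℕ, p.eval (k : ℚ) = Nat.card (MonotoneMap r k))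
    (E : Set α → ℚ[X])
    (hE : ∀ (B : Set α) (k : ℕ),
      (E B).eval (k : ℚ) = Nat.card (MonotoneMap (Subrel r (· ∈ B)) k))
    (m : ℕ) :
    p.eval (m : ℚ) =
      ∑ k ∈ Finset.range m, ∑ᶠ O ∈ {O | O.Nonempty ∧ O ∈ openSets r}, (E Oᶜ).eval (k : ℚ) := by
  rw [hp, card_monotoneMap_eq_sum_range, Nat.cast_sum]
  refine Finset.sum_congr rfl fun k _ => ?_
  simp only [hE]
  exact (Nat.castAddMonoidHom ℚ).map_finsum_mem _ (Set.toFinite _)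

open Classical in
/-- Recursive computation of `ehr`: for `m ≥ 1`,
`ehr_P(m) = Σ_{k=0}^{m-1} Σ_{∅ ≠ O ∈ top(P)} ehr_{P|(Fin n ∖ O)}(k)`. -/
theorem ehr_recursive {n : ℕ} (le : Fin n → Fin n → Prop)
    (hrefl : ∀ i, le i i)
    (htrans : ∀ i j k, le i j → le j k → le i k)
    (hn : 1 ≤ n)
    (p : ℚ[X]) (hp : ∀ k : ℕ, p.eval (k : ℚ) = LCount le k)
    (E : Set (Fin n) → ℚ[X])
    (hE : ∀ (B : Set (Fin n)) (k : ℕ), (E B).eval (k : ℚ) = LCountOn le B k) :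
    ∀ m : ℕ, 1 ≤ m →
      p.eval (m : ℚ) =
        ∑ k ∈ Finset.range m, ∑ᶠ O : Set (Fin n),
          if O.Nonempty ∧ (∀ i ∈ O, ∀ j, le i j → j ∈ O) then
            (E Oᶜ).eval (k : ℚ)
          else 0 := by
  have : Nonempty (Fin n) := Fin.pos_iff_nonempty.1 hn
  simpa only [← finsum_eq_if, Set.mem_ofPred_eq, openSets]
    using fun m _ => ehr_recursive_general le p hp E hE m
end

section
/- Characterization of the quasi-order by packed words: Let P be a quasi-poset on [n] and let i, j ∈ Fin n. The following assertions are equivalent: (1) i ≤_P j; (2) for all w ∈ L_P, w(i) ≤ w(j); (3) for all w ∈ L^str_P, w(i) ≤ w(j); (4) for all w ∈ W_P, w(i) ≤ w(j); (5) for all w ∈ W^str_P, w(i) ≤ w(j). -/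
/-!
The content is that strict packed words already detect `i ≤ j`. If `¬ i ≤ j`, order the elements `a`
first by whether `i ≤ a` and then by the size of their lower set. The first coordinate is monotone
and places `j` strictly below `i`; the second is strictly monotone, so the lexicographic pair is
both. Relabelling its finitely many values in increasing order by `0, …, k - 1` gives a strict
packed word `w` with `w j < w i`.
-/

theorem exists_surjective_fin_le_iff_le {α β : Type*} [LinearOrder β] {f : α → β}
    (hf : (Set.range f).Finite) :
    ∃ (k : ℕ) (w : α → Fin k), Function.Surjective w ∧ ∀ a b, w a ≤ w b ↔ f a ≤ f b := by
  have := hf.fintype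
  let pack := (Fintype.orderIsoFinOfCardEq (Set.range f) rfl).symm
  exact ⟨_, pack ∘ Set.rangeFactorization f,
    pack.surjective.comp Set.rangeFactorization_surjective, fun _ _ => pack.le_iff_le⟩

section Preorder

variable {α : Type*} [Preorder α]

theorem monotone_ncard_Iic [Finite α] : Monotone fun a : α => (Set.Iic a).ncard :=
  fun _ _ hab => Set.ncard_le_ncard (Set.Iic_subset_Iic.2 hab)

theorem strictMono_ncard_Iic [Finite α] : StrictMono fun a : α => (Set.Iic a).ncard :=
  fun _ _ hab => Set.ncard_lt_ncard (Set.Iic_ssubset_Iic.2 hab)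

theorem exists_monotone_strictMono_lex_lt {β : Type*} [PartialOrder β] {f : α → β}
    (hmono : Monotone f) (hstrict : StrictMono f) {i j : α} (hij : ¬ i ≤ j) :
    ∃ g : α → Bool ×ₗ β, Monotone g ∧ StrictMono g ∧ g j < g i := by
  classical
  have above_mono : Monotone fun a => decide (i ≤ a) := fun a b hab =>
    Bool.le_iff_imp.2 fun hia => decide_eq_true ((of_decide_eq_true hia).trans hab)
  refine ⟨fun a => toLex (decide (i ≤ a), f a), ?_, ?_, ?_⟩
  · exact Prod.Lex.toLex_mono.comp (above_mono.prodMk hmono)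
  · exact fun a b hab => Prod.Lex.toLex_strictMono
      (Prod.mk_lt_mk_of_le_of_lt (above_mono hab.le) (hstrict hab))
  · exact Prod.Lex.toLex_lt_toLex.2 (Or.inl (by simp [hij]))

theorem exists_surjective_monotone_strictMono_fin_lt [Finite α] {i j : α} (hij : ¬ i ≤ j) :
    ∃ (k : ℕ) (w : α → Fin k),
      Function.Surjective w ∧ Monotone w ∧ StrictMono w ∧ w j < w i := by
  obtain ⟨g, g_mono, g_strict, g_lt⟩ :=
    exists_monotone_strictMono_lex_lt monotone_ncard_Iic strictMono_ncard_Iic hij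
  obtain ⟨k, w, w_surj, w_le_iff⟩ := exists_surjective_fin_le_iff_le (Set.finite_range g)
  have w_lt_iff (a b : α) : w a < w b ↔ g a < g b := lt_iff_lt_of_le_iff_le (w_le_iff b a)
  exact ⟨k, w, w_surj, fun a b hab => (w_le_iff a b).2 (g_mono hab),
    fun a b hab => (w_lt_iff a b).2 (g_strict hab), (w_lt_iff j i).2 g_lt⟩

theorem le_iff_words_general [Finite α] (i j : α) :
    List.TFAE [
      i ≤ j,
      ∀ (k : ℕ) (w : α → Fin k), Monotone w → w i ≤ w j,
      ∀ (k : ℕ) (w : α → Fin k), Monotone w →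
        (∀ a b, a ≤ b → w a = w b → b ≤ a) → w i ≤ w j,
      ∀ (k : ℕ) (w : α → Fin k), Function.Surjective w → Monotone w → w i ≤ w j,
      ∀ (k : ℕ) (w : α → Fin k), Function.Surjective w → Monotone w →
        (∀ a b, a ≤ b → w a = w b → b ≤ a) → w i ≤ w j] := by
  tfae_have 1 → 2 := fun hij _ _ hmono => hmono hij
  tfae_have 2 → 3 := fun h k w hmono _ => h k w hmono
  tfae_have 2 → 4 := fun h k w _ hmono => h k w hmono
  tfae_have 3 → 5 := fun h k w _ hmono hstrict => h k w hmono hstrict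
  tfae_have 4 → 5 := fun h k w hsurj hmono _ => h k w hsurj hmono
  tfae_have 5 → 1 := by
    intro h
    by_contra hij
    obtain ⟨k, w, hsurj, hmono, hstrict, hlt⟩ := exists_surjective_monotone_strictMono_fin_lt hij
    have ge_of_eq (a b : α) (hab : a ≤ b) (heq : w a = w b) : b ≤ a :=
      not_lt_iff_le_imp_ge.1 (fun hab_lt => (hstrict hab_lt).ne heq) hab
    exact hlt.not_ge (h k w hsurj hmono ge_of_eq)
  tfae_finish

end Preorder

/-- Characterization of the quasi-order by packed words: `i ≤_P j` is equivalent to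
`w(i) ≤ w(j)` for all `w` in `L_P`, in `L^str_P`, in `W_P`, and in `W^str_P`. -/
theorem le_iff_words {n : ℕ} (le : Fin n → Fin n → Prop)
    (hrefl : ∀ i, le i i)
    (htrans : ∀ i j k, le i j → le j k → le i k)
    (i j : Fin n) :
    (le i j ↔ ∀ (k : ℕ) (w : Fin n → Fin k),
      (∀ a b, le a b → w a ≤ w b) → w i ≤ w j) ∧
    (le i j ↔ ∀ (k : ℕ) (w : Fin n → Fin k),
      (∀ a b, le a b → w a ≤ w b) → (∀ a b, le a b → w a = w b → le b a) →
      w i ≤ w j) ∧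
    (le i j ↔ ∀ (k : ℕ) (w : Fin n → Fin k), Function.Surjective w →
      (∀ a b, le a b → w a ≤ w b) → w i ≤ w j) ∧
    (le i j ↔ ∀ (k : ℕ) (w : Fin n → Fin k), Function.Surjective w →
      (∀ a b, le a b → w a ≤ w b) → (∀ a b, le a b → w a = w b → le b a) →
      w i ≤ w j) := by
  have words := @le_iff_words_general _ { le := le, le_refl := hrefl, le_trans := htrans } _ i j
  exact ⟨words.out 0 1, words.out 0 2, words.out 0 3, words.out 0 4⟩
end

section
/- Let P be a quasi-poset on [n] and let w' be a packed word of length n. Then w' ∈ W_P if and only if there exists a linear extension w ∈ E_P with w' ≤ w (in the order on packed words). -/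
/-!
Order the elements first by their letter in the word, and break ties by any linear extension of the
partial order induced on equivalence classes. When the word is monotone, this lexicographic order
extends the preorder and identifies only equivalent elements. On a finite preorder, numbering its
levels gives a linear extension lying above the word.
-/

open Function

section LexLinearExtension

variable {α β : Type*} [Preorder α]

/-- The lexicographic sorting key of `i`: its value under `f`, with ties broken by an arbitrary
linear extension of `α`. The extension is taken on the antisymmetrization, so that equivalent
elements with the same value get the same key. -/
noncomputable def lexLinearExtension (f : α → β) (i : α) :
    β ×ₗ LinearExtension (Antisymmetrization α (· ≤ ·)) :=
  toLex (f i, toLinearExtension (toAntisymmetrization (· ≤ ·) i))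

theorem lexLinearExtension_lt_of_lt [LT β] {f : α → β} {i j : α} (h : f i < f j) :
    lexLinearExtension f i < lexLinearExtension f j :=
  Prod.Lex.toLex_lt_toLex.2 (.inl h)

variable [PartialOrder β] {f : α → β}

theorem monotone_lexLinearExtension (hf : Monotone f) : Monotone (lexLinearExtension f) :=
  Prod.Lex.toLex_mono.comp <|
    hf.prodMk (toLinearExtension.monotone.comp toAntisymmetrization_mono)

theorem lexLinearExtension_eq_iff (hf : Monotone f) {i j : α} :
    lexLinearExtension f i = lexLinearExtension f j ↔ AntisymmRel (· ≤ ·) i j := by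
  constructor
  · intro h
    exact Quotient.exact (congrArg (fun p ↦ (ofLex p).2) h)
  · intro h
    exact le_antisymm (monotone_lexLinearExtension hf h.le) (monotone_lexLinearExtension hf h.ge)

end LexLinearExtension

theorem exists_orderEmbedding_fin_comp_surjective {α γ : Type*} [Finite α] [LinearOrder γ]
    (v : α → γ) :
    ∃ (k : ℕ) (w : α → Fin k) (e : Fin k ↪o γ), Surjective w ∧ ∀ i, e (w i) = v i := by
  have := Fintype.ofFinite (Set.range v)
  let levels := Fintype.orderIsoFinOfCardEq (Set.range v) rfl
  refine ⟨_, levels.symm ∘ Set.rangeFactorization v,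
    levels.toOrderEmbedding.trans (OrderEmbedding.subtype _),
    levels.symm.surjective.comp Set.rangeFactorization_surjective, fun i ↦ ?_⟩
  simp

theorem monotone_of_forall_lt_imp_lt {α β γ : Type*} [Preorder α] [LinearOrder β]
    [Preorder γ] {f : α → β} {w : α → γ} (hw : Monotone w)
    (hlt : ∀ i j, f i < f j → w i < w j) : Monotone f :=
  fun i j hij ↦ le_of_not_gt fun hji ↦ (hw hij).not_gt (hlt j i hji)

theorem mem_W_iff_le_linear_extension_general {α β : Type*} [Preorder α] [Finite α]
    [LinearOrder β] (f : α → β) :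
    Monotone f ↔
      ∃ (k : ℕ) (w : α → Fin k), Surjective w ∧
        Monotone w ∧
        (∀ i j, i ≤ j → w i = w j → j ≤ i) ∧
        (∀ i j, w i = w j ↔ AntisymmRel (· ≤ ·) i j) ∧
        (∀ i j, f i < f j → w i < w j) := by
  constructor
  · intro hf
    obtain ⟨k, w, e, hsurj, he⟩ :=
      exists_orderEmbedding_fin_comp_surjective (lexLinearExtension f)
    have hmono : Monotone w := fun i j hij ↦ by
      rw [← e.le_iff_le, he, he]
      exact monotone_lexLinearExtension hf hij
    have heq (i j : α) : w i = w j ↔ AntisymmRel (· ≤ ·) i j := by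
      rw [← e.injective.eq_iff, he, he, lexLinearExtension_eq_iff hf]
    have hlt (i j : α) (hij : f i < f j) : w i < w j := by
      rw [← e.lt_iff_lt, he, he]
      exact lexLinearExtension_lt_of_lt hij
    exact ⟨k, w, hsurj, hmono, fun i j _ hij ↦ ((heq i j).1 hij).ge, heq, hlt⟩
  · rintro ⟨k, w, -, hmono, -, -, hlt⟩
    exact monotone_of_forall_lt_imp_lt hmono hlt

/-- A packed word `w'` of length `n` belongs to `W_P` if and only if there is a linear
extension `w ∈ E_P` of `P` with `w' ≤ w` in the order on packed words. -/
theorem mem_W_iff_le_linear_extension {n m : ℕ} (le : Fin n → Fin n → Prop)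
    (hrefl : ∀ i, le i i)
    (htrans : ∀ i j k, le i j → le j k → le i k)
    (w' : Fin n → Fin m) (hw' : Function.Surjective w') :
    (∀ i j, le i j → w' i ≤ w' j) ↔
      ∃ (k : ℕ) (w : Fin n → Fin k), Function.Surjective w ∧
        (∀ i j, le i j → w i ≤ w j) ∧
        (∀ i j, le i j → w i = w j → le j i) ∧
        (∀ i j, w i = w j ↔ (le i j ∧ le j i)) ∧
        (∀ i j, w' i < w' j → w i < w j) := by
  let : Preorder (Fin n) := { le, lt i j := le i j ∧ ¬le j i, le_refl := hrefl, le_trans := htrans }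
  exact mem_W_iff_le_linear_extension_general w'
end

section
/- Let P be a quasi-poset on [n]. An element w ∈ W_P is maximal in W_P for the order ≤ on packed words (i.e. for all w' ∈ W_P, w ≤ w' implies w = w') if and only if w ∈ E_P. -/
/-!
If `w` takes the same value on `a` and `b` although `a ≰ b`, then refining `w` lexicographically by
the monotone predicate `a ≤ ·` and packing the result gives a strictly larger word, so `w` is not
maximal. Conversely, if all ties of `w` are forced by the quasi-poset, then a larger word `w'`
cannot break them, so `w` and `w'` induce the same weak order on the letters, and a weak order
determines its packed word because the only order isomorphism between `Fin k` and `Fin k'` is the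
identity on values.
-/

open Function

section Words

variable {α β γ δ : Type*}

/-- The order on packed words: `w'` preserves every strict inequality of `w`. The two words may take
values in different orders, which need not be of the form `Fin k`. -/
def WordLE [LT β] [LT γ] (w : α → β) (w' : α → γ) : Prop :=
  ∀ i j, w i < w j → w' i < w' j

theorem WordLE.le_of_le [LinearOrder β] [Preorder γ] {w : α → β} {w' : α → γ}
    (h : WordLE w w') {i j : α} (hij : w' i ≤ w' j) : w i ≤ w j :=
  not_lt.mp fun hji => (h j i hji).not_ge hij

theorem WordLE.eq_of_eq [LinearOrder β] [Preorder γ] {w : α → β} {w' : α → γ}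
    (h : WordLE w w') {i j : α} (hij : w' i = w' j) : w i = w j :=
  le_antisymm (h.le_of_le hij.le) (h.le_of_le hij.ge)

theorem WordLE.exists_orderIso [LinearOrder β] [LinearOrder γ] {w : α → β} {w' : α → γ}
    (h : WordLE w w') (h' : WordLE w' w) (hw : Surjective w) (hw' : Surjective w') :
    ∃ e : β ≃o γ, ∀ i, e (w i) = w' i := by
  let f : β → γ := fun b => w' (surjInv hw b)
  have f_apply (i : α) : f (w i) = w' i := h'.eq_of_eq (surjInv_eq hw (w i))
  have f_strictMono : StrictMono f := fun b c hbc => h _ _ (by simpa only [surjInv_eq] using hbc)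
  have f_surjective : Surjective f := fun c => (hw' c).imp' w fun i hi => (f_apply i).trans hi
  exact ⟨f_strictMono.orderIsoOfSurjective f f_surjective, f_apply⟩

theorem WordLE.val_eq {k k' : ℕ} {w : α → Fin k} {w' : α → Fin k'}
    (h : WordLE w w') (h' : WordLE w' w) (hw : Surjective w) (hw' : Surjective w') (i : α) :
    (w i : ℕ) = w' i := by
  obtain ⟨e, he⟩ := h.exists_orderIso h' hw hw'
  rw [← he, Fin.coe_orderIso_apply]

theorem wordLE_toLex_prodMk [LT β] [LT γ] (w : α → β) (u : α → γ) :
    WordLE w fun i => toLex (w i, u i) :=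
  fun _ _ hij => Prod.Lex.toLex_lt_toLex.mpr (Or.inl hij)

theorem exists_packing [LinearOrder δ] (f : α → δ) [Finite (Set.range f)] :
    ∃ (k : ℕ) (p : α → Fin k) (e : Fin k ↪o δ), Surjective p ∧ ∀ i, e (p i) = f i := by
  have := Fintype.ofFinite (Set.range f)
  let e : Fin (Fintype.card (Set.range f)) ≃o Set.range f := Fintype.orderIsoFinOfCardEq _ rfl
  refine ⟨_, fun i => e.symm (Set.rangeFactorization f i),
    e.toOrderEmbedding.trans (OrderEmbedding.subtype _),
    e.symm.surjective.comp Set.rangeFactorization_surjective, fun i => ?_⟩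
  exact congrArg Subtype.val (e.apply_symm_apply (Set.rangeFactorization f i))

end Words

section QuasiPoset

variable {α β γ : Type*} [Preorder α]

/-- Maximality among the packed words that are monotone on the quasi-poset `α`. Words of different
lengths are compared through the values of their letters in `ℕ`. -/
def IsMaximalWord {k : ℕ} (w : α → Fin k) : Prop :=
  ∀ (k' : ℕ) (w' : α → Fin k'), Surjective w' → Monotone w' → WordLE w w' →
    ∀ i, (w i : ℕ) = w' i

/-- The conditions which a monotone packed word must satisfy to be a linear extension of the
quasi-poset `α`: strictness, and having as ties exactly the equivalent pairs of elements. -/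
def IsLinearExtension (w : α → β) : Prop :=
  (∀ i j, i ≤ j → w i = w j → j ≤ i) ∧ ∀ i j, w i = w j ↔ i ≤ j ∧ j ≤ i

theorem isLinearExtension_iff_le_of_eq [PartialOrder β] {w : α → β} (hw : Monotone w) :
    IsLinearExtension w ↔ ∀ i j, w i = w j → i ≤ j := by
  refine ⟨fun h i j hij => ((h.2 i j).mp hij).1, fun h => ⟨fun i j _ hij => h j i hij.symm, ?_⟩⟩
  exact fun i j =>
    ⟨fun hij => ⟨h i j hij, h j i hij.symm⟩, fun hij => le_antisymm (hw hij.1) (hw hij.2)⟩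

theorem WordLE.symm_of_monotone [LinearOrder β] [Preorder γ] {w : α → β} {w' : α → γ}
    (h : WordLE w w') (hw' : Monotone w') (hties : ∀ i j, w i = w j → i ≤ j) : WordLE w' w := by
  intro i j hij
  by_contra! hji
  rcases hji.lt_or_eq with hlt | heq
  · exact hij.not_gt (h j i hlt)
  · exact hij.not_ge (hw' (hties j i heq))

theorem IsMaximalWord.eq_of_eq {k : ℕ} {w : α → Fin k} (hmax : IsMaximalWord w) (hw : Monotone w)
    [LinearOrder γ] [Finite γ] {u : α → γ} (hu : Monotone u) {i j : α} (hij : w i = w j) :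
    u i = u j := by
  let f : α → Fin k ×ₗ γ := fun i => toLex (w i, u i)
  have : Finite (Fin k ×ₗ γ) := Finite.of_equiv _ toLex
  obtain ⟨m, p, e, hp, hep⟩ := exists_packing f
  have f_mono : Monotone f := Prod.Lex.toLex_mono.comp (hw.prodMk hu)
  have p_mono : Monotone p := fun a b hab => e.le_iff_le.mp (by simpa only [hep] using f_mono hab)
  have le_p : WordLE w p := fun a b hab =>
    e.lt_iff_lt.mp (by simpa only [hep] using wordLE_toLex_prodMk w u a b hab)
  have val_eq : ∀ a, (w a : ℕ) = p a := hmax m p hp p_mono le_p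
  have p_eq : p i = p j := Fin.ext (by rw [← val_eq, ← val_eq, hij])
  have f_eq : f i = f j := by rw [← hep, ← hep, p_eq]
  exact congrArg (fun x => (ofLex x).2) f_eq

theorem IsMaximalWord.le_of_eq {k : ℕ} {w : α → Fin k} (hmax : IsMaximalWord w) (hw : Monotone w)
    {i j : α} (hij : w i = w j) : i ≤ j := by
  have above_i_mono : Monotone (i ≤ ·) := fun _ _ hab hia => hia.trans hab
  exact (hmax.eq_of_eq hw above_i_mono hij).mp le_rfl

theorem maximal_iff_linear_extension_general {k : ℕ} {w : α → Fin k} (hsurj : Surjective w)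
    (hmono : Monotone w) : IsMaximalWord w ↔ IsLinearExtension w := by
  rw [isLinearExtension_iff_le_of_eq hmono]
  refine ⟨fun hmax _ _ => hmax.le_of_eq hmono, fun hties k' w' hsurj' hmono' hle => ?_⟩
  exact hle.val_eq (hle.symm_of_monotone hmono' hties) hsurj hsurj'

end QuasiPoset

/-- An element `w ∈ W_P` is maximal in `W_P` for the order on packed words if and only
if it is a linear extension of `P`.  Equality of packed words of possibly different
lengths is expressed by equality of the values as natural numbers. -/
theorem maximal_iff_linear_extension {n k : ℕ} (le : Fin n → Fin n → Prop)
    (hrefl : ∀ i, le i i)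
    (htrans : ∀ i j k, le i j → le j k → le i k)
    (w : Fin n → Fin k)
    (hsurj : Function.Surjective w)
    (hmono : ∀ i j, le i j → w i ≤ w j) :
    (∀ (k' : ℕ) (w' : Fin n → Fin k'), Function.Surjective w' →
      (∀ i j, le i j → w' i ≤ w' j) →
      (∀ i j, w i < w j → w' i < w' j) →
      ∀ i, (w i : ℕ) = (w' i : ℕ)) ↔
    ((∀ i j, le i j → w i = w j → le j i) ∧
     (∀ i j, w i = w j ↔ (le i j ∧ le j i))) :=
  @maximal_iff_linear_extension_general _ { le := le, le_refl := hrefl, le_trans := htrans } _ _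
    hsurj hmono
end

section
/- Let P be a quasi-poset on [n] and let w be a packed word of length n. Then w ∈ W_P if and only if there exists a unique P-compatible equivalence relation ~ on Fin n such that w ∈ W^str_{P/~}. (In other words, W_P is the disjoint union, over all ~ ◁ P, of the sets W^str_{P/~}.) -/
/-- The quotient quasi-order `≤_{P/~}`: the transitive (here reflexive-transitive)
closure of (`i ≤_P j` or `i ~ j`). -/
def quotLe {n : ℕ} (le r : Fin n → Fin n → Prop) : Fin n → Fin n → Prop :=
  Relation.ReflTransGen (fun i j => le i j ∨ r i j)

/-- `~ ◁ P`: the equivalence relation `r` is `P`-compatible. -/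
def Compat {n : ℕ} (le r : Fin n → Fin n → Prop) : Prop :=
  (∀ x y, r x y →
    Relation.ReflTransGen (fun a b => r a x ∧ r b x ∧ (le a b ∨ le b a)) x y) ∧
  (∀ i j, quotLe le r i j → quotLe le r j i → r i j)

/-!
If `w` is strict for `P/~`, then `~` refines the fibres of `w` and, by the second half of
compatibility, contains every relation `i ≤_P j` inside a fibre. As the classes of `~` are
connected for `P`, they can only be the connected components of the fibres of `w`. Conversely, for
`w` in `W_P` this partition is compatible and makes `w` strict: a chain of the quotient order
between two points of equal value never leaves the fibre, because `w` increases along it.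
-/

section

open Relation

variable {ι α : Type*} {le r : ι → ι → Prop} {w : ι → α} {i j : ι}

/-- The quotient quasi-order `≤_{P/~}` over an arbitrary index type; on `Fin n` it is `quotLe`. -/
def QuotientLE (le r : ι → ι → Prop) : ι → ι → Prop :=
  ReflTransGen fun i j => le i j ∨ r i j

/-- `P`-compatibility `~ ◁ P` over an arbitrary index type; on `Fin n` it is `Compat`. -/
def IsCompatible (le r : ι → ι → Prop) : Prop :=
  (∀ x y, r x y → ReflTransGen (fun a b => r a x ∧ r b x ∧ (le a b ∨ le b a)) x y) ∧
  (∀ i j, QuotientLE le r i j → QuotientLE le r j i → r i j)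

/-- Membership in `W^str` of the quasi-order `le`. Surjectivity of `w` is not part of the notion,
and `i ∼ j` is encoded by `le j i`, the other inequality being assumed. -/
def IsStrictExtension [LE α] (le : ι → ι → Prop) (w : ι → α) : Prop :=
  (∀ i j, le i j → w i ≤ w j) ∧ (∀ i j, le i j → w i = w j → le j i)

/-- The relation of lying in the same connected component (for comparability) of a fibre of `w`. -/
def FiberConnected (le : ι → ι → Prop) (w : ι → α) : ι → ι → Prop :=
  EqvGen fun i j => le i j ∧ w i = w j

theorem reflTransGen_within_class_of_eqvGen {s : ι → ι → Prop} (hs : s ≤ le) (h : EqvGen s i j) :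
    ReflTransGen (fun a b => EqvGen s a i ∧ EqvGen s b i ∧ (le a b ∨ le b a)) i j := by
  rw [← EqvGen.reflTransGen_symmGen] at h ⊢
  induction h with
  | refl => exact .refl
  | tail hia hab ih =>
    exact ih.tail ⟨symm hia, symm (hia.tail hab), hab.imp (hs _ _) (hs _ _)⟩

theorem QuotientLE.map_le [Preorder α] (h : QuotientLE le r i j)
    (hle : ∀ i j, le i j → w i ≤ w j) (hr : ∀ i j, r i j → w i ≤ w j) : w i ≤ w j := by
  induction h with
  | refl => exact le_rfl
  | tail _ hab ih => exact ih.trans (hab.elim (hle _ _) (hr _ _))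

namespace FiberConnected

theorem equivalence (le : ι → ι → Prop) (w : ι → α) : Equivalence (FiberConnected le w) :=
  EqvGen.is_equivalence _

theorem minimal (hr : Equivalence r) (hle : ∀ i j, le i j → w i = w j → r i j)
    (h : FiberConnected le w i j) : r i j :=
  hr.eqvGen_iff.1 (EqvGen.mono (fun a b hab => hle a b hab.1 hab.2) i j h)

theorem map_eq (h : FiberConnected le w i j) : w i = w j :=
  h.minimal (r := fun a b => w a = w b) (eq_equivalence.comap w) fun _ _ _ hab => hab

theorem map_le_of_quotientLE [Preorder α] (hw : ∀ i j, le i j → w i ≤ w j)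
    (h : QuotientLE le (FiberConnected le w) i j) : w i ≤ w j :=
  h.map_le hw fun _ _ hab => hab.map_eq.le

theorem of_quotientLE [PartialOrder α] (hw : ∀ i j, le i j → w i ≤ w j)
    (h : QuotientLE le (FiberConnected le w) i j) (hij : w i = w j) :
    FiberConnected le w i j := by
  induction h with
  | refl => exact (equivalence le w).refl i
  | @tail a b hia hab ih =>
    have hwab : w a = w b :=
      le_antisymm (map_le_of_quotientLE hw (.single hab)) (hij ▸ map_le_of_quotientLE hw hia)
    refine (equivalence le w).trans (ih (hij.trans hwab.symm)) ?_
    exact hab.elim (fun hle => .rel _ _ ⟨hle, hwab⟩) id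

theorem isCompatible [PartialOrder α] (hw : ∀ i j, le i j → w i ≤ w j) :
    IsCompatible le (FiberConnected le w) := by
  refine ⟨fun _ _ => reflTransGen_within_class_of_eqvGen fun _ _ hab => hab.1,
    fun i j hij hji => ?_⟩
  exact of_quotientLE hw hij
    (le_antisymm (map_le_of_quotientLE hw hij) (map_le_of_quotientLE hw hji))

theorem isStrictExtension [PartialOrder α] (hw : ∀ i j, le i j → w i ≤ w j) :
    IsStrictExtension (QuotientLE le (FiberConnected le w)) w :=
  ⟨fun _ _ => map_le_of_quotientLE hw, fun _ _ hij hwij =>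
    .single (.inr ((equivalence le w).symm (of_quotientLE hw hij hwij)))⟩

end FiberConnected

theorem IsStrictExtension.map_eq_of_rel [PartialOrder α]
    (hw : IsStrictExtension (QuotientLE le r) w) (hij : r i j) (hji : r j i) : w i = w j :=
  le_antisymm (hw.1 i j (.single (.inr hij))) (hw.1 j i (.single (.inr hji)))

theorem IsCompatible.rel_of_le_of_map_eq [LE α] (hc : IsCompatible le r)
    (hw : IsStrictExtension (QuotientLE le r) w) (hij : le i j) (hwij : w i = w j) : r i j :=
  have hq : QuotientLE le r i j := .single (.inl hij)
  hc.2 i j hq (hw.2 i j hq hwij)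

theorem IsCompatible.fiberConnected_of_rel (hc : IsCompatible le r)
    (hr : ∀ i j, r i j → w i = w j) (hij : r i j) : FiberConnected le w i j := by
  rw [FiberConnected, ← EqvGen.reflTransGen_symmGen]
  refine ReflTransGen.mono (fun a b ⟨hai, hbi, hab⟩ => ?_) i j (hc.1 i j hij)
  have hwab : w a = w b := (hr a i hai).trans (hr b i hbi).symm
  exact hab.imp (⟨·, hwab⟩) (⟨·, hwab.symm⟩)

theorem IsCompatible.eq_fiberConnected [PartialOrder α] (hc : IsCompatible le r)
    (hr : Equivalence r) (hw : IsStrictExtension (QuotientLE le r) w) :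
    r = FiberConnected le w := by
  ext i j
  exact ⟨hc.fiberConnected_of_rel fun _ _ hab => hw.map_eq_of_rel hab (hr.symm hab),
    FiberConnected.minimal hr fun _ _ => hc.rel_of_le_of_map_eq hw⟩

theorem mem_W_iff_existsUnique_compat_general [PartialOrder α] (le : ι → ι → Prop) (w : ι → α) :
    (∀ i j, le i j → w i ≤ w j) ↔
      ∃! r : {r : ι → ι → Prop // Equivalence r ∧ IsCompatible le r},
        IsStrictExtension (QuotientLE le r.1) w := by
  constructor
  · intro hw
    refine ⟨⟨FiberConnected le w, FiberConnected.equivalence le w,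
      FiberConnected.isCompatible hw⟩, FiberConnected.isStrictExtension hw, ?_⟩
    rintro ⟨r, hr, hc⟩ hstrict
    exact Subtype.ext (hc.eq_fiberConnected hr hstrict)
  · rintro ⟨r, hstrict, -⟩ i j hij
    exact hstrict.1 i j (.single (.inl hij))

end

/-- A packed word `w` belongs to `W_P` if and only if there is a unique
`P`-compatible equivalence relation `~` with `w ∈ W^str_{P/~}`. -/
theorem mem_W_iff_existsUnique_compat {n k : ℕ} (le : Fin n → Fin n → Prop)
    (hrefl : ∀ i, le i i)
    (htrans : ∀ i j k, le i j → le j k → le i k)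
    (w : Fin n → Fin k) (hw : Function.Surjective w) :
    (∀ i j, le i j → w i ≤ w j) ↔
      ∃! r : {r : Fin n → Fin n → Prop // Equivalence r ∧ Compat le r},
        (∀ i j, quotLe le r.1 i j → w i ≤ w j) ∧
        (∀ i j, quotLe le r.1 i j → w i = w j → quotLe le r.1 j i) :=
  mem_W_iff_existsUnique_compat_general le w
end

section
/- For every surjection w : Fin n → Fin k (k ≥ 1), the relation defined by i ≤_P j iff (i = j or w(i) < w(j)) is a partial order on Fin n, and for every packed word w' of length n one has w' ∈ W^str_P if and only if w ≤ w' in the order on packed words. -/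
/-- The partial order attached to a packed word `w`: `i ≤_P j` iff `i = j` or
`w i < w j`. -/
def wordLE {n k : ℕ} (w : Fin n → Fin k) : Fin n → Fin n → Prop :=
  fun i j => i = j ∨ w i < w j

section

variable {α β : Type*}

/-- The set `L^str_P` for a relation `r` in the role of `≤_P`, with an arbitrary ordered type `γ`
in place of `Fin k`. Once `r i j` holds, `i ~_P j` amounts to `r j i`. -/
def strictMaps (r : α → α → Prop) (γ : Type*) [LE γ] : Set (α → γ) :=
  {f | (∀ i j, r i j → f i ≤ f j) ∧ ∀ i j, r i j → f i = f j → r j i}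

theorem mem_strictMaps_le_iff_monotone_and_strictMono {γ : Type*} [Preorder α] [PartialOrder γ]
    {f : α → γ} : f ∈ strictMaps (· ≤ ·) γ ↔ Monotone f ∧ StrictMono f := by
  constructor
  · rintro ⟨hmono, hstrict⟩
    exact ⟨hmono, fun i j hij =>
      (hmono i j hij.le).lt_of_ne fun heq => hij.not_ge (hstrict i j hij.le heq)⟩
  · rintro ⟨hmono, hstrict⟩
    refine ⟨fun i j hij => hmono hij, fun i j hij heq => ?_⟩
    by_contra hji
    exact (hstrict (lt_of_le_not_ge hij hji)).ne heq

theorem mem_strictMaps_le_iff_strictMono {γ : Type*} [PartialOrder α] [PartialOrder γ]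
    {f : α → γ} : f ∈ strictMaps (· ≤ ·) γ ↔ StrictMono f :=
  mem_strictMaps_le_iff_monotone_and_strictMono.trans (and_iff_right_of_imp StrictMono.monotone)

/-- The relation `wordLE` for a map between arbitrary types: distinct elements of a
fibre of `w` are incomparable. -/
def eqOrMapLT [LT β] (w : α → β) : α → α → Prop :=
  fun i j => i = j ∨ w i < w j

theorem wordLE_partialOrder_and_Wstr_general [Preorder β] (w : α → β) :
    IsPartialOrder α (eqOrMapLT w) ∧
      ∀ (γ : Type*) [PartialOrder γ] (f : α → γ),
        f ∈ strictMaps (eqOrMapLT w) γ ↔ ∀ i j, w i < w j → f i < f j := by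
  -- The strict part of `eqOrMapLT w` is `w i < w j`, so strict monotonicity is the right-hand side.
  let : PartialOrder α := partialOrderOfSO (w ⁻¹'o (· < ·))
  exact ⟨inferInstanceAs (IsPartialOrder α (· ≤ ·)), fun γ _ f => mem_strictMaps_le_iff_strictMono⟩

end

/-- For a surjection `w : Fin n → Fin k` (`k ≥ 1`), the relation `wordLE w` is a
partial order `P` on `Fin n`, and a packed word `w'` of length `n` belongs to
`W^str_P` if and only if `w ≤ w'` in the order on packed words. -/
theorem wordLE_partialOrder_and_Wstr {n k : ℕ} (hk : 1 ≤ k)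
    (w : Fin n → Fin k) (hw : Function.Surjective w) :
    (∀ i, wordLE w i i) ∧
    (∀ i j l, wordLE w i j → wordLE w j l → wordLE w i l) ∧
    (∀ i j, wordLE w i j → wordLE w j i → i = j) ∧
    (∀ (m : ℕ) (w' : Fin n → Fin m), Function.Surjective w' →
      (((∀ i j, wordLE w i j → w' i ≤ w' j) ∧
        (∀ i j, wordLE w i j → w' i = w' j → wordLE w j i)) ↔
       (∀ i j, w i < w j → w' i < w' j))) := by
  obtain ⟨hP, hmem⟩ := wordLE_partialOrder_and_Wstr_general w
  exact ⟨hP.refl, hP.trans, hP.antisymm, fun m w' _ => hmem (Fin m) w'⟩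
end

section
/- Let A and B be bialgebras over a field K in cointeraction via ρ : A → A ⊗ B, and assume A is a Hopf algebra with antipode S. Then S is a morphism of B-comodules: ρ ∘ S = (S ⊗ id_B) ∘ ρ. -/
open TensorProduct

/-!
The convolution algebra of linear maps out of a coalgebra turns the theorem into uniqueness of
inverses. Since `ρ` is compatible with comultiplications and counits, `f ↦ (f ⊗ id) ∘ ρ` preserves
convolution products and units; it sends `id` to `ρ`, so `S * id = 1` makes `(S ⊗ id) ∘ ρ` a left
inverse of `ρ`. Composition with the algebra morphism `ρ` also preserves convolution products and
units, so `id * S = 1` makes `ρ ∘ S` a right inverse of `ρ`.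
-/

section Convolution

open Coalgebra HopfAlgebra WithConv

variable {K A B H L : Type*} [CommSemiring K]

theorem map_comp_convMul_map_comp
    [AddCommMonoid A] [Module K A] [CoalgebraStruct K A]
    [AddCommMonoid H] [Module K H] [CoalgebraStruct K H]
    [NonUnitalNonAssocSemiring B] [Module K B] [SMulCommClass K B B] [IsScalarTower K B B]
    [NonUnitalNonAssocSemiring L] [Module K L] [SMulCommClass K L L] [IsScalarTower K L L]
    {ρ : A →ₗ[K] H ⊗[K] B}
    (hcomul : map comul LinearMap.id ∘ₗ ρ =
      map LinearMap.id (LinearMap.mul' K B) ∘ₗ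
        (tensorTensorTensorComm K H B H B).toLinearMap ∘ₗ map ρ ρ ∘ₗ comul)
    (f g : H →ₗ[K] L) :
    toConv (map f LinearMap.id ∘ₗ ρ) * toConv (map g LinearMap.id ∘ₗ ρ) =
      toConv (map (ofConv (toConv f * toConv g)) LinearMap.id ∘ₗ ρ) := by
  have mul_map_map : LinearMap.mul' K (L ⊗[K] B) ∘ₗ
        map (map f LinearMap.id) (map g LinearMap.id) =
      map (LinearMap.mul' K L ∘ₗ map f g) LinearMap.id ∘ₗ
        map LinearMap.id (LinearMap.mul' K B) ∘ₗ
          (tensorTensorTensorComm K H B H B).toLinearMap := by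
    ext; simp
  apply WithConv.ofConv_injective
  calc LinearMap.mul' K (L ⊗[K] B) ∘ₗ
        map (map f LinearMap.id ∘ₗ ρ) (map g LinearMap.id ∘ₗ ρ) ∘ₗ comul
      = (LinearMap.mul' K (L ⊗[K] B) ∘ₗ
          map (map f LinearMap.id) (map g LinearMap.id)) ∘ₗ map ρ ρ ∘ₗ comul := by
        simp only [map_comp, LinearMap.comp_assoc]
    _ = map (LinearMap.mul' K L ∘ₗ map f g) LinearMap.id ∘ₗ
          map comul LinearMap.id ∘ₗ ρ := by
        rw [mul_map_map, hcomul]; simp only [LinearMap.comp_assoc]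
    _ = map (ofConv (toConv f * toConv g)) LinearMap.id ∘ₗ ρ := by
        rw [← LinearMap.comp_assoc, ← map_comp, LinearMap.id_comp, LinearMap.comp_assoc,
          LinearMap.convMul_def]

theorem map_convOne_comp
    [AddCommMonoid A] [Module K A] [Coalgebra K A]
    [AddCommMonoid H] [Module K H] [Coalgebra K H]
    [Semiring B] [Algebra K B] [Semiring L] [Algebra K L] {ρ : A →ₗ[K] H ⊗[K] B}
    (hcounit : (TensorProduct.lid K B).toLinearMap ∘ₗ map counit LinearMap.id ∘ₗ ρ =
      Algebra.linearMap K B ∘ₗ counit) :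
    toConv (map (ofConv (1 : WithConv (H →ₗ[K] L))) LinearMap.id ∘ₗ ρ) = 1 := by
  have map_convOne : map (ofConv (1 : WithConv (H →ₗ[K] L))) LinearMap.id =
      mk K L B 1 ∘ₗ (TensorProduct.lid K B).toLinearMap ∘ₗ map counit LinearMap.id := by
    ext; simp [LinearMap.convOne_def, Algebra.algebraMap_eq_smul_one, smul_tmul]
  apply WithConv.ofConv_injective
  calc map (ofConv (1 : WithConv (H →ₗ[K] L))) LinearMap.id ∘ₗ ρ
      = mk K L B 1 ∘ₗ Algebra.linearMap K B ∘ₗ counit := by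
        rw [map_convOne, ← hcounit]; simp only [LinearMap.comp_assoc]
    _ = Algebra.linearMap K (L ⊗[K] B) ∘ₗ counit := by
        ext; simp [Algebra.algebraMap_eq_smul_one, Algebra.TensorProduct.one_def]

theorem algHom_convMul_algHom_comp_antipode
    [Semiring A] [HopfAlgebra K A] [Semiring L] [Algebra K L] (φ : A →ₐ[K] L) :
    toConv φ.toLinearMap * toConv (φ.toLinearMap ∘ₗ antipode K) = 1 := by
  apply WithConv.ofConv_injective
  calc ofConv (toConv φ.toLinearMap * toConv (φ.toLinearMap ∘ₗ antipode K))
      = φ.toLinearMap ∘ₗ ofConv (toConv LinearMap.id * toConv (antipode K)) :=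
        (LinearMap.algHom_comp_convMul_distrib φ (toConv LinearMap.id)
          (toConv (antipode K))).symm
    _ = φ.toLinearMap ∘ₗ Algebra.linearMap K A ∘ₗ counit := by
        rw [LinearMap.id_mul_antipode, LinearMap.convOne_def]
    _ = Algebra.linearMap K L ∘ₗ counit := by
        ext; simp

theorem map_antipode_comp_convMul
    [AddCommMonoid A] [Module K A] [Coalgebra K A] [Semiring H] [HopfAlgebra K H]
    [Semiring B] [Algebra K B] {ρ : A →ₗ[K] H ⊗[K] B}
    (hcomul : map comul LinearMap.id ∘ₗ ρ =
      map LinearMap.id (LinearMap.mul' K B) ∘ₗ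
        (tensorTensorTensorComm K H B H B).toLinearMap ∘ₗ map ρ ρ ∘ₗ comul)
    (hcounit : (TensorProduct.lid K B).toLinearMap ∘ₗ map counit LinearMap.id ∘ₗ ρ =
      Algebra.linearMap K B ∘ₗ counit) :
    toConv (map (antipode K) LinearMap.id ∘ₗ ρ) * toConv ρ = 1 := by
  calc toConv (map (antipode K) LinearMap.id ∘ₗ ρ) * toConv ρ
      = toConv (map (antipode K) LinearMap.id ∘ₗ ρ) *
          toConv (map LinearMap.id LinearMap.id ∘ₗ ρ) := by
        rw [map_id, LinearMap.id_comp]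
    _ = toConv (map (ofConv (toConv (antipode K) * toConv LinearMap.id)) LinearMap.id ∘ₗ ρ) :=
        map_comp_convMul_map_comp hcomul (antipode K) LinearMap.id
    _ = 1 := by
        rw [LinearMap.antipode_mul_id, map_convOne_comp hcounit]

theorem antipode_comodule_morphism_general
    [Semiring A] [HopfAlgebra K A] [Semiring H] [HopfAlgebra K H] [Semiring B] [Algebra K B]
    (ρ : A →ₐ[K] H ⊗[K] B)
    (hcomul : map comul LinearMap.id ∘ₗ ρ.toLinearMap =
      map LinearMap.id (LinearMap.mul' K B) ∘ₗ
        (tensorTensorTensorComm K H B H B).toLinearMap ∘ₗ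
          map ρ.toLinearMap ρ.toLinearMap ∘ₗ comul)
    (hcounit : (TensorProduct.lid K B).toLinearMap ∘ₗ
        map counit LinearMap.id ∘ₗ ρ.toLinearMap =
      Algebra.linearMap K B ∘ₗ counit) :
    ρ.toLinearMap ∘ₗ antipode K = map (antipode K) LinearMap.id ∘ₗ ρ.toLinearMap :=
  toConv_injective
    (left_inv_eq_right_inv (map_antipode_comp_convMul hcomul hcounit)
      (algHom_convMul_algHom_comp_antipode ρ)).symm

end Convolution

/-- If `A` and `B` are bialgebras in cointeraction via `ρ : A → A ⊗ B` and `A` is a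
Hopf algebra with antipode `S`, then `S` is a morphism of `B`-comodules:
`ρ ∘ S = (S ⊗ id) ∘ ρ`. -/
theorem antipode_comodule_morphism
    {K : Type*} [Field K]
    {A : Type*} [Semiring A] [HopfAlgebra K A]
    {B : Type*} [Semiring B] [Bialgebra K B]
    (ρ : A →ₐ[K] A ⊗[K] B)
    -- coassociativity of the coaction: `(ρ ⊗ id) ∘ ρ = (id ⊗ Δ_B) ∘ ρ`
    (hcoassoc :
      (TensorProduct.assoc K A B B).toLinearMap ∘ₗ
          (TensorProduct.map ρ.toLinearMap LinearMap.id) ∘ₗ ρ.toLinearMap =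
        (TensorProduct.map LinearMap.id Coalgebra.comul) ∘ₗ ρ.toLinearMap)
    -- counitality of the coaction: `(id ⊗ ε_B) ∘ ρ = id`
    (hcounit :
      (TensorProduct.rid K A).toLinearMap ∘ₗ
          (TensorProduct.map LinearMap.id Coalgebra.counit) ∘ₗ ρ.toLinearMap =
        LinearMap.id)
    -- compatibility with `Δ_A`: `(Δ_A ⊗ id_B) ∘ ρ = m³₂₄ ∘ (ρ ⊗ ρ) ∘ Δ_A`
    (hcomp :
      (TensorProduct.map Coalgebra.comul LinearMap.id) ∘ₗ ρ.toLinearMap =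
        (TensorProduct.map LinearMap.id (LinearMap.mul' K B)) ∘ₗ
          (TensorProduct.tensorTensorTensorComm K A B A B).toLinearMap ∘ₗ
          (TensorProduct.map ρ.toLinearMap ρ.toLinearMap) ∘ₗ Coalgebra.comul)
    -- compatibility with `ε_A`: `(ε_A ⊗ id_B)(ρ a) = ε_A(a) 1_B`
    (hcounitA :
      (TensorProduct.lid K B).toLinearMap ∘ₗ
          (TensorProduct.map Coalgebra.counit LinearMap.id) ∘ₗ ρ.toLinearMap =
        (Algebra.linearMap K B) ∘ₗ Coalgebra.counit) :
    ρ.toLinearMap ∘ₗ (HopfAlgebra.antipode (R := K) (A := A)) =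
      (TensorProduct.map (HopfAlgebra.antipode (R := K) (A := A)) LinearMap.id) ∘ₗ
        ρ.toLinearMap :=
  antipode_comodule_morphism_general ρ hcomp hcounitA
end
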